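/- Let d ≥ 3 be an integer, m = (d−2)/(d+2), and let v : [0,T) × ℝ^d → (0,∞) be a smooth positive solution of the fast diffusion equation ∂v/∂t = Δ(v^m) such that J(t) = ∫_{ℝ^d} v(t,x)^{2d/(d+2)} dx is finite and differentiable with J'(t) = −(m+1) ∫ |∇ v(t)^m|² dx. Then J'(t) ≤ −(2d/(d+2)) S_d^{−1} J(t)^{1−2/d} for all t, and consequently J(t)^{2/d} ≤ J(0)^{2/d} − (4/((d+2) S_d)) t; in particular J must vanish by time T ≤ ((d+2)/4) S_d J(0)^{2/d}. -/

import Mathlib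

open MeasureTheory Real

noncomputable section

/-- Surface area of the unit sphere `𝕊^{d-1} ⊆ ℝ^d`. -/
def sphereArea (d : ℕ) : ℝ := 2 * Real.pi ^ ((d : ℝ) / 2) / Real.Gamma ((d : ℝ) / 2)

/-- Green function of `-Δ` on `ℝ^d`, `d ≥ 3`: `G_d(x) = |x|^{2-d} / ((d-2)|𝕊^{d-1}|)`. -/
def greenKernel (d : ℕ) (x : EuclideanSpace ℝ (Fin d)) : ℝ :=
  ‖x‖ ^ ((2 : ℝ) - d) / (((d : ℝ) - 2) * sphereArea d)

/-- `(−Δ)⁻¹ v`, the convolution of `v` with the Green function of `-Δ` on `ℝ^d`. -/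
def invLap (d : ℕ) (v : EuclideanSpace ℝ (Fin d) → ℝ) (x : EuclideanSpace ℝ (Fin d)) : ℝ :=
  ∫ y, greenKernel d (x - y) * v y

/-- The Aubin–Talenti (optimal Sobolev) constant
`S_d = (1/(π d (d−2))) (Γ(d)/Γ(d/2))^{2/d}`. -/
def sobolevConst (d : ℕ) : ℝ :=
  1 / (Real.pi * d * ((d : ℝ) - 2)) *
    (Real.Gamma (d : ℝ) / Real.Gamma ((d : ℝ) / 2)) ^ ((2 : ℝ) / (d : ℝ))

/-- Membership in `D^{1,2}(ℝ^d)`: a (weakly) differentiable function with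
`∇u ∈ L²` and `u ∈ L^{2*}`, `2* = 2d/(d-2)`. -/
def MemD12 (d : ℕ) (u : EuclideanSpace ℝ (Fin d) → ℝ) : Prop :=
  Differentiable ℝ u ∧
  Integrable (fun x => ‖gradient u x‖ ^ 2) ∧
  Integrable (fun x => |u x| ^ (2 * (d : ℝ) / ((d : ℝ) - 2)))

/-- The `L^p` norm of `u`, written with real exponents: `(∫ |u|^p)^{1/p}`. -/
def lpNorm' {d : ℕ} (p : ℝ) (u : EuclideanSpace ℝ (Fin d) → ℝ) : ℝ :=
  (∫ x, |u x| ^ p) ^ (1 / p)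

/-- The Laplacian `Δu = ∑ ∂²u/∂x_i²`. -/
def lap (d : ℕ) (u : EuclideanSpace ℝ (Fin d) → ℝ) (x : EuclideanSpace ℝ (Fin d)) : ℝ :=
  ∑ i : Fin d, iteratedFDeriv ℝ 2 u x ![EuclideanSpace.single i 1, EuclideanSpace.single i 1]

/-!
The Sobolev inequality for `u = v ^ m` turns the dissipation identity into
`J' ≤ -c * J ^ (1 - 2 / d)`, that is, `(J ^ (2 / d))' ≤ -2 * c / d`; since `J` is positive on
`[0, T)`, this bounds `T`.

The Sobolev inequality with its sharp constant is proved by mass transport, following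
Cordero-Erausquin, Nazaret and Villani. A triangular (Knothe) map `Φ` carries the density
`u ^ (2 * d / (d - 2))` to the multiple of the bubble density `(1 + ‖x‖ ^ 2) ^ (-d)` with the same
mass. AM–GM bounds `(det DΦ) ^ (1 / d)` by `(div Φ) / d`; after the change of variables, an
integration by parts and Cauchy–Schwarz leave `‖∇u‖₂` against the second moment of the bubble, and
the beta integrals evaluate the constant. The transport is carried out on a cube for a positive
perturbation of a compactly supported `u`; exhausting the space by cubes and cutting off remove
these restrictions.
-/

section FiberTransport

open Set Filter Topology

variable {X : Type*} [TopologicalSpace X]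

lemma continuous_of_strictMono_of_eq {α β : Type*} [LinearOrder α] [TopologicalSpace α]
    [OrderTopology α] [LinearOrder β] [TopologicalSpace β] [OrderClosedTopology β]
    {Φ : X → α → β} {C : X → β} {τ : X → α} (hmono : ∀ x, StrictMono (Φ x))
    (hΦ : ∀ q, Continuous fun x => Φ x q) (hC : Continuous C) (hτ : ∀ x, Φ x (τ x) = C x) :
    Continuous τ := by
  refine continuous_iff_continuousAt.2 fun x => tendsto_order.2 ⟨fun q hq => ?_, fun q hq => ?_⟩
  · have hlt : Φ x q < C x := hτ x ▸ hmono x hq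
    filter_upwards [((hΦ q).tendsto x).eventually_lt (hC.tendsto x) hlt] with y hy
    exact (hmono y).lt_iff_lt.1 (hτ y ▸ hy)
  · have hlt : C x < Φ x q := hτ x ▸ hmono x hq
    filter_upwards [(hC.tendsto x).eventually_lt ((hΦ q).tendsto x) hlt] with y hy
    exact (hmono y).lt_iff_lt.1 (hτ y ▸ hy)

lemma hasDerivAt_of_comp_eventuallyEq {𝕜 : Type*} [NontriviallyNormedField 𝕜] [CompleteSpace 𝕜]
    {Φ C τ : 𝕜 → 𝕜} {p q s : 𝕜} (hΦ : HasStrictDerivAt Φ p (τ s)) (hp : p ≠ 0)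
    (hC : HasDerivAt C q s) (hτ : ContinuousAt τ s) (heq : ∀ᶠ r in 𝓝 s, Φ (τ r) = C r) :
    HasDerivAt τ (q / p) s := by
  have hinv := hΦ.to_localInverse hp
  rw [heq.self_of_nhds] at hinv
  have hleft : hΦ.localInverse Φ p (τ s) hp ∘ C =ᶠ[𝓝 s] τ := by
    filter_upwards [heq, hτ.eventually (hΦ.hasStrictFDerivAt_equiv hp).eventually_left_inverse]
      with r hr hr'
    rw [Function.comp_apply, ← hr]
    exact hr'
  rw [div_eq_inv_mul]
  exact (hinv.hasDerivAt.comp s hC).congr_of_eventuallyEq hleft.symm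

/-- `τ x` is the monotone rearrangement of `[a, b]` carrying the density `f x` to the density
`g x`, jointly continuous in the parameter `x`. The transport property is recorded as
`τ' = f / (g ∘ τ)` on the open interval. -/
structure IsFiberTransport (a b : ℝ) (f g τ : X → ℝ → ℝ) : Prop where
  continuous_uncurry : Continuous (Function.uncurry τ)
  mem_Icc : ∀ x s, τ x s ∈ Icc a b
  map_left : ∀ x, τ x a = a
  map_right : ∀ x, τ x b = b
  hasDerivAt : ∀ x, ∀ s ∈ Ioo a b, HasDerivAt (τ x) (f x s / g x (τ x s)) s

variable {a b : ℝ} {f g τ : X → ℝ → ℝ}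

lemma IsFiberTransport.integral_comp_mul (h : IsFiberTransport a b f g τ) (hab : a ≤ b)
    (hf : Continuous (Function.uncurry f)) (hg : Continuous (Function.uncurry g))
    (hgpos : ∀ x s, 0 < g x s) {ψ : ℝ → ℝ} (hψ : Continuous ψ) (x : X) :
    ∫ s in a..b, ψ (τ x s) * (f x s / g x (τ x s)) = ∫ s in a..b, ψ s := by
  have hτ : Continuous (τ x) := h.continuous_uncurry.comp (by fun_prop : Continuous (x, ·))
  have hderiv : Continuous fun s => f x s / g x (τ x s) :=
    (hf.comp (by fun_prop : Continuous (x, ·))).div₀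
      (hg.comp (by fun_prop : Continuous fun s => (x, τ x s))) fun s => (hgpos x _).ne'
  have hsubst := intervalIntegral.integral_comp_mul_deriv'' (f := τ x) (a := a) (b := b)
    (g := ψ) hτ.continuousOn
    (fun s hs => (h.hasDerivAt x s (by simpa [hab] using hs)).hasDerivWithinAt)
    hderiv.continuousOn hψ.continuousOn
  simpa only [Function.comp_apply, h.map_left, h.map_right] using hsubst

lemma strictMono_integral_of_pos {g : ℝ → ℝ} (hg : Continuous g) (hgpos : ∀ s, 0 < g s) (a : ℝ) :
    StrictMono fun q => ∫ s in a..q, g s :=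
  strictMono_of_deriv_pos fun q => by
    rw [(hg.integral_hasStrictDerivAt a q).hasDerivAt.deriv]
    exact hgpos q

lemma exists_integral_eq_integral_projIcc (hab : a ≤ b) {f g : ℝ → ℝ} (hf : Continuous f)
    (hg : Continuous g) (hfpos : ∀ s, 0 < f s)
    (hmass : ∫ s in a..b, f s = ∫ s in a..b, g s) (s : ℝ) :
    ∃ q ∈ Icc a b, ∫ r in a..q, g r = ∫ r in a..projIcc a b hab s, f r := by
  have hs := (projIcc a b hab s).2
  refine intermediate_value_Icc hab
    (intervalIntegral.continuous_primitive (hg.intervalIntegrable · ·) a).continuousOn ⟨?_, ?_⟩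
  · rw [intervalIntegral.integral_same]
    exact intervalIntegral.integral_nonneg hs.1 fun r _ => (hfpos r).le
  · rw [← hmass]
    exact intervalIntegral.integral_mono_interval le_rfl hs.1 hs.2
      (Eventually.of_forall fun r => (hfpos r).le) (hf.intervalIntegrable _ _)

theorem exists_isFiberTransport (hab : a ≤ b) (hf : Continuous (Function.uncurry f))
    (hg : Continuous (Function.uncurry g)) (hfpos : ∀ x s, 0 < f x s) (hgpos : ∀ x s, 0 < g x s)
    (hmass : ∀ x, ∫ s in a..b, f x s = ∫ s in a..b, g x s) :
    ∃ τ, IsFiberTransport a b f g τ := by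
  have hfx : ∀ x, Continuous (f x) := fun x => hf.comp (by fun_prop : Continuous (x, ·))
  have hgx : ∀ x, Continuous (g x) := fun x => hg.comp (by fun_prop : Continuous (x, ·))
  choose τ hτmem hτ using fun x => exists_integral_eq_integral_projIcc hab (hfx x) (hgx x)
    (hfpos x) (hmass x)
  have hmono : ∀ x, StrictMono fun q => ∫ s in a..q, g x s := fun x =>
    strictMono_integral_of_pos (hgx x) (hgpos x) a
  have hτcont : Continuous (Function.uncurry τ) := by
    refine continuous_of_strictMono_of_eq (Φ := fun (p : X × ℝ) q => ∫ r in a..q, g p.1 r)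
      (C := fun p => ∫ r in a..projIcc a b hab p.2, f p.1 r) (fun p => hmono p.1) (fun q => ?_) ?_
      fun p => hτ p.1 p.2
    · exact intervalIntegral.continuous_parametric_intervalIntegral_of_continuous'
        (f := fun (p : X × ℝ) => g p.1) (hg.comp (continuous_fst.prodMap continuous_id)) a q
    · exact intervalIntegral.continuous_parametric_intervalIntegral_of_continuous
        (f := fun (p : X × ℝ) => f p.1) (hf.comp (continuous_fst.prodMap continuous_id))
        (continuous_subtype_val.comp (continuous_projIcc.comp continuous_snd))
  refine ⟨τ, hτcont, hτmem, fun x => (hmono x).injective ?_, fun x => (hmono x).injective ?_,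
    fun x s hs => ?_⟩
  · simp [hτ]
  · simp [hτ, hmass]
  · refine hasDerivAt_of_comp_eventuallyEq ((hgx x).integral_hasStrictDerivAt a (τ x s))
      (hgpos x _).ne' ((hfx x).integral_hasStrictDerivAt a s).hasDerivAt
      (hτcont.comp (by fun_prop : Continuous (x, ·))).continuousAt ?_
    filter_upwards [Icc_mem_nhds hs.1 hs.2] with r hr
    rw [hτ, projIcc_of_mem hab hr]

end FiberTransport

section Knothe

open Set Filter Topology

/-- The cube `[a, b]ⁿ`. -/
abbrev cube (n : ℕ) (a b : ℝ) : Set (Fin n → ℝ) := Icc (fun _ => a) (fun _ => b)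

/-- The marginal density of `F`, restricted to the cube, in all coordinates but the first. -/
def marginal {n : ℕ} (a b : ℝ) (F : (Fin (n + 1) → ℝ) → ℝ) (x : Fin n → ℝ) : ℝ :=
  ∫ s in a..b, F (Fin.cons s x)

/-- `T` is a Knothe map of the cube `[a, b]ⁿ` transporting the density `F` to the density `G`: its
Jacobian matrix is triangular, with diagonal `lam x` at `x`. Only the diagonal is recorded, since
the off-diagonal derivatives need not exist. -/
structure IsKnotheMap {n : ℕ} (a b : ℝ) (F G : (Fin n → ℝ) → ℝ)
    (T lam : (Fin n → ℝ) → Fin n → ℝ) : Prop where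
  continuous_map : Continuous T
  continuous_diag : Continuous lam
  mem_Icc : ∀ x i, T x i ∈ Icc a b
  diag_pos : ∀ x i, 0 < lam x i
  density_eq : ∀ x, F x = G (T x) * ∏ i, lam x i
  hasDerivAt_diag : ∀ x i, x i ∈ Ioo a b →
    HasDerivAt (fun s => T (Function.update x i s) i) (lam x i) (x i)
  integral_comp_mul_prod : ∀ ψ : (Fin n → ℝ) → ℝ, Continuous ψ →
    ∫ x in cube n a b, ψ (T x) * ∏ i, lam x i = ∫ x in cube n a b, ψ x

variable {n : ℕ} {a b : ℝ}

lemma setIntegral_cube_insertNth (hab : a ≤ b) (i : Fin (n + 1)) {ψ : (Fin (n + 1) → ℝ) → ℝ}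
    (hψ : Continuous ψ) :
    ∫ x in cube (n + 1) a b, ψ x = ∫ x in cube n a b, ∫ s in a..b, ψ (i.insertNth s x) := by
  let e := (MeasurableEquiv.piFinSuccAbove (fun _ : Fin (n + 1) => ℝ) i).symm
  have he : MeasurePreserving e := (volume_preserving_piFinSuccAbove (fun _ => ℝ) i).symm
  have hpre : e ⁻¹' cube (n + 1) a b = Icc a b ×ˢ cube n a b := by
    ext ⟨s, x⟩
    exact Fin.insertNth_mem_Icc
  have hcont : Continuous fun p : ℝ × (Fin n → ℝ) => ψ (e p) :=
    hψ.comp (by fun_prop :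
      Continuous fun p : ℝ × (Fin n → ℝ) => (i.insertNth p.1 p.2 : Fin (n + 1) → ℝ))
  rw [← he.setIntegral_preimage_emb e.measurableEmbedding, hpre, Measure.volume_eq_prod,
    ← Measure.prod_restrict, integral_prod_symm]
  · refine setIntegral_congr_fun measurableSet_Icc fun x _ => ?_
    rw [intervalIntegral.integral_of_le hab, integral_Icc_eq_integral_Ioc]
    rfl
  · rw [Measure.prod_restrict]
    exact hcont.continuousOn.integrableOn_compact (isCompact_Icc.prod isCompact_Icc)

lemma setIntegral_marginal (hab : a ≤ b) {F : (Fin (n + 1) → ℝ) → ℝ} (hF : Continuous F) :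
    ∫ x in cube n a b, marginal a b F x = ∫ x in cube (n + 1) a b, F x := by
  simp only [marginal, setIntegral_cube_insertNth hab 0 hF, Fin.insertNth_zero']

lemma continuous_uncurry_comp_cons {F : (Fin (n + 1) → ℝ) → ℝ} (hF : Continuous F) :
    Continuous (Function.uncurry fun x s => F (Fin.cons s x)) :=
  hF.comp (by fun_prop :
    Continuous fun p : (Fin n → ℝ) × ℝ => (Fin.cons p.2 p.1 : Fin (n + 1) → ℝ))

lemma continuous_marginal {F : (Fin (n + 1) → ℝ) → ℝ} (hF : Continuous F) :
    Continuous (marginal a b F) :=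
  intervalIntegral.continuous_parametric_intervalIntegral_of_continuous'
    (continuous_uncurry_comp_cons hF) a b

lemma marginal_pos (hab : a < b) {F : (Fin (n + 1) → ℝ) → ℝ} (hF : Continuous F)
    (hFpos : ∀ x, 0 < F x) (x : Fin n → ℝ) : 0 < marginal a b F x :=
  intervalIntegral.intervalIntegral_pos_of_pos
    (((continuous_uncurry_comp_cons hF).comp
      (by fun_prop : Continuous (x, ·))).intervalIntegrable _ _)
    (fun _ => hFpos _) hab

lemma setIntegral_cube_zero (F : (Fin 0 → ℝ) → ℝ) (x : Fin 0 → ℝ) :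
    ∫ y in cube 0 a b, F y = F x := by
  have huniv : cube 0 a b = univ := eq_univ_of_forall fun y => ⟨finZeroElim, finZeroElim⟩
  rw [huniv, Measure.restrict_univ, Measure.volume_pi_eq_dirac x, integral_dirac]

lemma continuous_finTail : Continuous (Fin.tail : (Fin (n + 1) → ℝ) → Fin n → ℝ) :=
  continuous_pi fun i => continuous_apply i.succ

namespace IsKnotheMap

variable {F G : (Fin n → ℝ) → ℝ} {T lam : (Fin n → ℝ) → Fin n → ℝ}

lemma prod_diag_pos (h : IsKnotheMap a b F G T lam) (x : Fin n → ℝ) : 0 < ∏ i, lam x i :=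
  Finset.prod_pos fun i _ => h.diag_pos x i

lemma continuous_prod_diag (h : IsKnotheMap a b F G T lam) : Continuous fun x => ∏ i, lam x i :=
  continuous_finsetProd _ fun i _ => (continuous_apply i).comp h.continuous_diag

lemma integral_comp_mul_density (h : IsKnotheMap a b F G T lam) (hG : Continuous G)
    {ψ : (Fin n → ℝ) → ℝ} (hψ : Continuous ψ) :
    ∫ x in cube n a b, ψ (T x) * F x = ∫ x in cube n a b, ψ x * G x := by
  rw [← h.integral_comp_mul_prod (fun x => ψ x * G x) (hψ.mul hG)]
  simp only [h.density_eq, mul_assoc]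

end IsKnotheMap

section Cons

variable {F G : (Fin (n + 1) → ℝ) → ℝ} {T lam : (Fin n → ℝ) → Fin n → ℝ}
  {τ : (Fin n → ℝ) → ℝ → ℝ}

/-- Extends a map `T` of the last `n` coordinates to a triangular map by a fibrewise map `τ` of
the first one. -/
def knotheCons (τ : (Fin n → ℝ) → ℝ → ℝ) (T : (Fin n → ℝ) → Fin n → ℝ) (x : Fin (n + 1) → ℝ) :
    Fin (n + 1) → ℝ :=
  Fin.cons (τ (Fin.tail x) (x 0)) (T (Fin.tail x))

lemma continuous_knotheCons (hτ : Continuous (Function.uncurry τ)) (hT : Continuous T) :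
    Continuous (knotheCons τ T) := by
  have hτ' : Continuous fun x : Fin (n + 1) → ℝ => τ (Fin.tail x) (x 0) :=
    hτ.comp (continuous_finTail.prodMk (continuous_apply 0))
  exact hτ'.finCons (hT.comp continuous_finTail)

/-- The derivative in `s` of the fibre transport from `F / ∏ lam` to `G ∘ T` along `τ`. -/
def fiberDiag (F G : (Fin (n + 1) → ℝ) → ℝ) (T lam : (Fin n → ℝ) → Fin n → ℝ)
    (τ : (Fin n → ℝ) → ℝ → ℝ) (x : Fin n → ℝ) (s : ℝ) : ℝ :=
  F (Fin.cons s x) / (∏ i, lam x i) / G (Fin.cons (τ x s) (T x))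

lemma setIntegral_knotheCons (hab : a ≤ b) (hlam : Continuous lam)
    (hT : Continuous T) (hτ : Continuous (Function.uncurry τ))
    {D : (Fin n → ℝ) → ℝ → ℝ} (hD : Continuous (Function.uncurry D))
    (hsubst : ∀ ψ : ℝ → ℝ, Continuous ψ → ∀ x,
      ∫ s in a..b, ψ (τ x s) * D x s = ∫ s in a..b, ψ s)
    (hpush : ∀ ψ : (Fin n → ℝ) → ℝ, Continuous ψ →
      ∫ x in cube n a b, ψ (T x) * ∏ i, lam x i = ∫ x in cube n a b, ψ x)
    {ψ : (Fin (n + 1) → ℝ) → ℝ} (hψ : Continuous ψ) :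
    ∫ x in cube (n + 1) a b, ψ (knotheCons τ T x) * ∏ i, knotheCons D lam x i =
      ∫ x in cube (n + 1) a b, ψ x := by
  have hcont : Continuous fun x => ψ (knotheCons τ T x) * ∏ i, knotheCons D lam x i :=
    (hψ.comp (continuous_knotheCons hτ hT)).mul (continuous_finsetProd _ fun i _ =>
      (continuous_apply i).comp (continuous_knotheCons hD hlam))
  rw [← setIntegral_marginal hab hcont, ← setIntegral_marginal hab hψ,
    ← hpush _ (continuous_marginal hψ)]
  refine setIntegral_congr_fun measurableSet_Icc fun x _ => ?_
  calc marginal a b (fun x => ψ (knotheCons τ T x) * ∏ i, knotheCons D lam x i) x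
      = ∫ s in a..b, ψ (Fin.cons (τ x s) (T x)) * D x s * ∏ i, lam x i := by
        simp only [marginal, knotheCons, Fin.prod_univ_succ, Fin.cons_zero, Fin.cons_succ,
          Fin.tail_cons, mul_assoc]
    _ = marginal a b ψ (T x) * ∏ i, lam x i := by
        rw [intervalIntegral.integral_mul_const,
          hsubst (fun r => ψ (Fin.cons r (T x))) (hψ.comp (by fun_prop)), marginal]

lemma IsKnotheMap.cons (h : IsKnotheMap a b (marginal a b F) (marginal a b G) T lam)
    (hab : a ≤ b) (hF : Continuous F) (hG : Continuous G) (hFpos : ∀ x, 0 < F x)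
    (hGpos : ∀ x, 0 < G x)
    (hτ : IsFiberTransport a b (fun x s => F (Fin.cons s x) / ∏ i, lam x i)
      (fun x s => G (Fin.cons s (T x))) τ) :
    IsKnotheMap a b F G (knotheCons τ T) (knotheCons (fiberDiag F G T lam τ) lam) := by
  have hf : Continuous (Function.uncurry fun x s => F (Fin.cons s x) / ∏ i, lam x i) :=
    (continuous_uncurry_comp_cons hF).div₀ (h.continuous_prod_diag.comp continuous_fst)
      fun p => (h.prod_diag_pos p.1).ne'
  have hg : Continuous (Function.uncurry fun x s => G (Fin.cons s (T x))) :=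
    (continuous_uncurry_comp_cons hG).comp (h.continuous_map.prodMap continuous_id)
  have hdiag : Continuous (Function.uncurry (fiberDiag F G T lam τ)) :=
    hf.div₀ (hg.comp (continuous_fst.prodMk hτ.continuous_uncurry)) fun p => (hGpos _).ne'
  refine ⟨continuous_knotheCons hτ.continuous_uncurry h.continuous_map,
    continuous_knotheCons hdiag h.continuous_diag, fun x i => ?_, fun x i => ?_, fun x => ?_,
    fun x i => ?_, fun ψ hψ => setIntegral_knotheCons hab h.continuous_diag h.continuous_map
      hτ.continuous_uncurry hdiag
      (fun ψ hψ => hτ.integral_comp_mul hab hf hg (fun _ _ => hGpos _) hψ)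
      h.integral_comp_mul_prod hψ⟩
  · cases i using Fin.cases with
    | zero => exact hτ.mem_Icc _ _
    | succ i => exact h.mem_Icc _ i
  · cases i using Fin.cases with
    | zero => exact div_pos (div_pos (hFpos _) (h.prod_diag_pos _)) (hGpos _)
    | succ i => exact h.diag_pos _ i
  · have hprod := (h.prod_diag_pos (Fin.tail x)).ne'
    have hGT := (hGpos (knotheCons τ T x)).ne'
    simp only [Fin.prod_univ_succ, knotheCons, fiberDiag, Fin.cons_zero, Fin.cons_succ,
      Fin.cons_self_tail] at hGT ⊢
    field_simp
  · cases i using Fin.cases with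
    | zero =>
      intro hx
      simpa only [knotheCons, Fin.tail_update_zero, Function.update_self, Fin.cons_zero]
        using! hτ.hasDerivAt (Fin.tail x) (x 0) hx
    | succ i =>
      intro hx
      simpa only [knotheCons, Fin.tail_update_succ, Fin.cons_succ]
        using! h.hasDerivAt_diag (Fin.tail x) i hx

end Cons

theorem exists_isKnotheMap (hab : a < b) {F G : (Fin n → ℝ) → ℝ} (hF : Continuous F)
    (hG : Continuous G) (hFpos : ∀ x, 0 < F x) (hGpos : ∀ x, 0 < G x)
    (hmass : ∫ x in cube n a b, F x = ∫ x in cube n a b, G x) :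
    ∃ T lam, IsKnotheMap a b F G T lam := by
  induction n with
  | zero =>
    refine ⟨id, fun _ => finZeroElim, continuous_id, continuous_const, fun _ => finZeroElim,
      fun _ => finZeroElim, fun x => ?_, fun _ => finZeroElim, fun ψ _ => by simp⟩
    simpa [setIntegral_cube_zero _ x] using hmass
  | succ n ih =>
    obtain ⟨T, lam, h⟩ := ih (continuous_marginal hF) (continuous_marginal hG)
      (marginal_pos hab hF hFpos) (marginal_pos hab hG hGpos)
      (by rw [setIntegral_marginal hab.le hF, setIntegral_marginal hab.le hG, hmass])
    obtain ⟨τ, hτ⟩ := exists_isFiberTransport (X := Fin n → ℝ) hab.le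
      (f := fun x s => F (Fin.cons s x) / ∏ i, lam x i) (g := fun x s => G (Fin.cons s (T x)))
      ((continuous_uncurry_comp_cons hF).div₀ (h.continuous_prod_diag.comp continuous_fst)
        fun p => (h.prod_diag_pos p.1).ne')
      ((continuous_uncurry_comp_cons hG).comp (h.continuous_map.prodMap continuous_id))
      (fun x _ => div_pos (hFpos _) (h.prod_diag_pos x)) (fun _ _ => hGpos _) fun x => by
        rw [intervalIntegral.integral_div, div_eq_iff (h.prod_diag_pos x).ne']
        exact h.density_eq x
    exact ⟨_, _, h.cons hab.le hF hG hFpos hGpos hτ⟩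

end Knothe

section CubeInequality

open Set Filter Topology

variable {n : ℕ} {a b : ℝ}

lemma setIntegral_cube_const (hab : a ≤ b) (c : ℝ) :
    ∫ _ in cube n a b, c = (b - a) ^ n * c := by
  rw [setIntegral_const, smul_eq_mul, measureReal_def, Real.volume_Icc_pi_toReal fun _ => hab,
    Finset.prod_const, Finset.card_univ, Fintype.card_fin]

lemma integral_deriv_mul_le_of_mem_Icc (hab : a ≤ b) {τ τ' h h' : ℝ → ℝ} (hτ : Continuous τ)
    (hτ' : Continuous τ') (hh' : Continuous h') (hmem : ∀ s, τ s ∈ Icc a b)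
    (hderiv : ∀ s ∈ Ioo a b, HasDerivAt τ (τ' s) s) (hderiv' : ∀ s, HasDerivAt h (h' s) s) {c : ℝ}
    (hc : 0 ≤ c) (ha : h a = c) (hb : h b = c) :
    ∫ s in a..b, τ' s * h s ≤ (b - a) * c - ∫ s in a..b, τ s * h' s := by
  have hh : Continuous h := continuous_iff_continuousAt.2 fun s => (hderiv' s).continuousAt
  rw [intervalIntegral.integral_mul_deriv_eq_deriv_mul_of_hasDerivAt hτ.continuousOn
    hh.continuousOn (fun s hs => hderiv s (by simpa [hab] using hs)) (fun s _ => hderiv' s)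
    (hτ'.intervalIntegrable a b) (hh'.intervalIntegrable a b), ha, hb]
  nlinarith [(hmem b).2, (hmem a).1]

lemma setIntegral_cube_deriv_mul_le (hab : a ≤ b) (i : Fin (n + 1))
    {τ τ' h h' : (Fin (n + 1) → ℝ) → ℝ} (hτ : Continuous τ) (hτ' : Continuous τ')
    (hh : Continuous h) (hh' : Continuous h') (hmem : ∀ x, τ x ∈ Icc a b)
    (hderiv : ∀ x, x i ∈ Ioo a b → HasDerivAt (fun s => τ (Function.update x i s)) (τ' x) (x i))
    (hderiv' : ∀ x, HasDerivAt (fun s => h (Function.update x i s)) (h' x) (x i)) {c : ℝ}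
    (hc : 0 ≤ c) (ha : ∀ x, x i = a → h x = c) (hb : ∀ x, x i = b → h x = c) :
    ∫ x in cube (n + 1) a b, τ' x * h x ≤
      (b - a) ^ (n + 1) * c - ∫ x in cube (n + 1) a b, τ x * h' x := by
  have hins : Continuous fun p : (Fin n → ℝ) × ℝ => (i.insertNth p.2 p.1 : Fin (n + 1) → ℝ) := by
    fun_prop
  have hslice (x : Fin n → ℝ) : Continuous fun s : ℝ => (i.insertNth s x : Fin (n + 1) → ℝ) := by
    fun_prop
  have hint {ψ : (Fin (n + 1) → ℝ) → ℝ} (hψ : Continuous ψ) :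
      IntegrableOn (fun x => ∫ s in a..b, ψ (i.insertNth s x)) (cube n a b) :=
    (intervalIntegral.continuous_parametric_intervalIntegral_of_continuous'
      (f := fun x s => ψ (i.insertNth s x)) (hψ.comp hins) a b).integrableOn_Icc
  have hconst : IntegrableOn (fun _ : Fin n → ℝ => (b - a) * c) (cube n a b) :=
    continuous_const.integrableOn_Icc
  have hτ'h := hτ'.fun_mul hh
  have hτh' := hτ.fun_mul hh'
  rw [setIntegral_cube_insertNth hab i hτ'h, setIntegral_cube_insertNth hab i hτh', pow_succ,
    mul_assoc, ← setIntegral_cube_const hab, ← integral_sub hconst (hint hτh')]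
  refine integral_mono (hint hτ'h) (hconst.sub (hint hτh')) fun x => ?_
  refine integral_deriv_mul_le_of_mem_Icc hab (hτ.comp (hslice x)) (hτ'.comp (hslice x))
    (hh'.comp (hslice x)) (fun s => hmem _) (fun s hs => ?_) (fun s => ?_) hc (ha _ (by simp))
    (hb _ (by simp))
  · simpa using! hderiv (i.insertNth s x) (by simpa using hs)
  · simpa using! hderiv' (i.insertNth s x)

lemma prod_rpow_inv_card_le {ι : Type*} [Fintype ι] [Nonempty ι] {l : ι → ℝ} (hl : ∀ i, 0 ≤ l i) :
    (∏ i, l i) ^ (1 / (Fintype.card ι : ℝ)) ≤ 1 / (Fintype.card ι : ℝ) * ∑ i, l i := by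
  have := Real.geom_mean_le_arith_mean_weighted Finset.univ
    (fun _ : ι => 1 / (Fintype.card ι : ℝ)) l (fun _ _ => by positivity) (by simp)
    fun i _ => hl i
  rwa [Real.finsetProd_rpow _ _ fun i _ => hl i, ← Finset.mul_sum] at this

lemma hasDerivAt_comp_update {φ : (Fin n → ℝ) → ℝ} (hφ : Differentiable ℝ φ) (x : Fin n → ℝ)
    (i : Fin n) :
    HasDerivAt (fun s => φ (Function.update x i s)) (fderiv ℝ φ x (Pi.single i 1)) (x i) := by
  have hx : HasFDerivAt φ (fderiv ℝ φ x) (Function.update x i (x i)) := by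
    simpa using (hφ x).hasFDerivAt
  exact hx.comp_hasDerivAt (x i) (hasDerivAt_update x i (x i))

namespace IsKnotheMap

variable {F G : (Fin n → ℝ) → ℝ} {T lam : (Fin n → ℝ) → Fin n → ℝ}

lemma setIntegral_rpow_eq (h : IsKnotheMap a b F G T lam) (hG : Continuous G)
    (hGpos : ∀ x, 0 < G x) (p : ℝ) :
    ∫ x in cube n a b, G x ^ (1 - p) = ∫ x in cube n a b, (∏ i, lam x i) ^ p * F x ^ (1 - p) := by
  rw [← h.integral_comp_mul_prod _ (hG.rpow_const fun x => .inl (hGpos x).ne')]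
  refine integral_congr_ae (.of_forall fun x => ?_)
  have hprod : ∏ i, lam x i = (∏ i, lam x i) ^ p * (∏ i, lam x i) ^ (1 - p) := by
    rw [← rpow_add (h.prod_diag_pos x), add_sub_cancel, rpow_one]
  simp only [h.density_eq, mul_rpow (hGpos _).le (h.prod_diag_pos x).le]
  linear_combination G (T x) ^ (1 - p) * hprod

lemma setIntegral_rpow_le_sum [NeZero n] (h : IsKnotheMap a b F G T lam) (hF : Continuous F)
    (hG : Continuous G) (hFpos : ∀ x, 0 < F x) (hGpos : ∀ x, 0 < G x) :
    ∫ x in cube n a b, G x ^ (1 - 1 / (n : ℝ)) ≤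
      1 / n * ∑ i, ∫ x in cube n a b, lam x i * F x ^ (1 - 1 / (n : ℝ)) := by
  have hFp : Continuous fun x => F x ^ (1 - 1 / (n : ℝ)) :=
    hF.rpow_const fun x => .inl (hFpos x).ne'
  have hlam (i : Fin n) : Continuous fun x => lam x i := (continuous_apply i).comp h.continuous_diag
  rw [h.setIntegral_rpow_eq hG hGpos,
    ← integral_finsetSum _ fun i _ => ((hlam i).fun_mul hFp).integrableOn_Icc, ← integral_const_mul]
  refine integral_mono ((h.continuous_prod_diag.rpow_const fun x =>
    .inl (h.prod_diag_pos x).ne').mul hFp).integrableOn_Icc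
    (continuous_const.mul (continuous_finsetSum _ fun i _ => (hlam i).mul hFp)).integrableOn_Icc
    fun x => ?_
  have hamgm := prod_rpow_inv_card_le fun i => (h.diag_pos x i).le
  rw [Fintype.card_fin] at hamgm
  simp only [← Finset.sum_mul, ← mul_assoc]
  exact mul_le_mul_of_nonneg_right hamgm (rpow_nonneg (hFpos x).le _)

theorem setIntegral_rpow_le [NeZero n] (h : IsKnotheMap a b F G T lam) (hab : a ≤ b)
    (hF : Continuous F) (hG : Continuous G) (hFpos : ∀ x, 0 < F x) (hGpos : ∀ x, 0 < G x)
    {φ : (Fin n → ℝ) → ℝ} (hφ : ContDiff ℝ 1 φ) (hFφ : ∀ x, F x ^ (1 - 1 / (n : ℝ)) = φ x) {c : ℝ}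
    (hc : 0 ≤ c) (hbd : ∀ x i, x i = a ∨ x i = b → φ x = c) :
    ∫ x in cube n a b, G x ^ (1 - 1 / (n : ℝ)) ≤
      (b - a) ^ n * c - 1 / n * ∫ x in cube n a b, fderiv ℝ φ x (T x) := by
  have hn : (n : ℝ) ≠ 0 := NeZero.ne _
  have hT (i : Fin n) : Continuous fun x => T x i := (continuous_apply i).comp h.continuous_map
  have hφ' (i : Fin n) : Continuous fun x => fderiv ℝ φ x (Pi.single i 1) :=
    (hφ.continuous_fderiv one_ne_zero).clm_apply continuous_const
  have hparts (i : Fin n) : ∫ x in cube n a b, lam x i * φ x ≤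
      (b - a) ^ n * c - ∫ x in cube n a b, T x i * fderiv ℝ φ x (Pi.single i 1) := by
    obtain ⟨k, rfl⟩ := Nat.exists_eq_succ_of_ne_zero (NeZero.ne n)
    exact setIntegral_cube_deriv_mul_le hab i (hT i)
      ((continuous_apply i).comp h.continuous_diag) hφ.continuous (hφ' i) (h.mem_Icc · i)
      (h.hasDerivAt_diag · i) (hasDerivAt_comp_update (hφ.differentiable one_ne_zero) · i) hc
      (fun x hx => hbd x i (.inl hx)) fun x hx => hbd x i (.inr hx)
  have hsum : ∫ x in cube n a b, fderiv ℝ φ x (T x) =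
      ∑ i, ∫ x in cube n a b, T x i * fderiv ℝ φ x (Pi.single i 1) := by
    rw [← integral_finsetSum _ fun i _ => ((hT i).fun_mul (hφ' i)).integrableOn_Icc]
    refine integral_congr_ae (.of_forall fun x => ?_)
    simpa only [map_sum, map_smul, smul_eq_mul]
      using congrArg (fderiv ℝ φ x) (pi_eq_sum_univ' (T x))
  calc ∫ x in cube n a b, G x ^ (1 - 1 / (n : ℝ))
      ≤ 1 / n * ∑ i, ∫ x in cube n a b, lam x i * F x ^ (1 - 1 / (n : ℝ)) :=
        h.setIntegral_rpow_le_sum hF hG hFpos hGpos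
    _ ≤ 1 / n * ∑ i, ((b - a) ^ n * c -
          ∫ x in cube n a b, T x i * fderiv ℝ φ x (Pi.single i 1)) := by
        simp only [hFφ]
        gcongr with i
        exact hparts i
    _ = (b - a) ^ n * c - 1 / n * ∫ x in cube n a b, fderiv ℝ φ x (T x) := by
        rw [Finset.sum_sub_distrib, ← hsum, Finset.sum_const, Finset.card_univ, Fintype.card_fin,
          nsmul_eq_mul]
        field_simp

end IsKnotheMap

end CubeInequality

section SobolevDuality

open Set Filter Topology

/-- The Sobolev exponent `2* = 2n / (n - 2)`. -/
def critExp (n : ℕ) : ℝ := 2 * n / (n - 2)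

/-- The exponent `2 (n - 1) / (n - 2) = (1 - 1 / n) 2*`, which is critical for the trace of
`W^{1,2}` functions on hypersurfaces. -/
def traceExp (n : ℕ) : ℝ := 2 * (n - 1) / (n - 2)

variable {n : ℕ}

lemma critExp_pos (hn : 2 < n) : 0 < critExp n := by
  have : (2 : ℝ) < n := mod_cast hn
  exact div_pos (by linarith) (by linarith)

lemma traceExp_pos (hn : 2 < n) : 0 < traceExp n := by
  have : (2 : ℝ) < n := mod_cast hn
  exact div_pos (by linarith) (by linarith)

lemma critExp_mul_one_sub_inv (hn : 2 < n) : critExp n * (1 - 1 / n) = traceExp n := by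
  have : (2 : ℝ) < n := mod_cast hn
  rw [critExp, traceExp]
  field_simp

lemma two_mul_traceExp_sub_one (hn : 2 < n) : 2 * (traceExp n - 1) = critExp n := by
  have : (2 : ℝ) < n := mod_cast hn
  have : (n : ℝ) - 2 ≠ 0 := by linarith
  rw [critExp, traceExp]
  field_simp
  ring

lemma integral_mul_le_sqrt_mul_sqrt {α : Type*} [MeasurableSpace α] {μ : Measure α} {f g : α → ℝ}
    (hf0 : 0 ≤ f) (hg0 : 0 ≤ g) (hf : MemLp f 2 μ) (hg : MemLp g 2 μ) :
    ∫ x, f x * g x ∂μ ≤ √(∫ x, f x ^ 2 ∂μ) * √(∫ x, g x ^ 2 ∂μ) := by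
  have htwo : ENNReal.ofReal 2 = 2 := by norm_num
  simpa [Real.sqrt_eq_rpow] using integral_mul_le_Lp_mul_Lq_of_nonneg (μ := μ)
    Real.HolderConjugate.two_two (.of_forall hf0) (.of_forall hg0) (htwo ▸ hf) (htwo ▸ hg)

variable {a b : ℝ}

lemma memLp_two_restrict_cube {f : (Fin n → ℝ) → ℝ} (hf : Continuous f) :
    MemLp f 2 (volume.restrict (cube n a b)) :=
  (memLp_two_iff_integrable_sq hf.aestronglyMeasurable).2 (hf.pow 2).integrableOn_Icc

lemma setIntegral_cube_pos (hab : a < b) {F : (Fin n → ℝ) → ℝ} (hF : Continuous F)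
    (hFpos : ∀ x, 0 < F x) : 0 < ∫ x in cube n a b, F x := by
  rw [setIntegral_pos_iff_support_of_nonneg_ae (.of_forall fun x => (hFpos x).le)
    hF.integrableOn_Icc, Function.support_eq_univ fun x => (hFpos x).ne', univ_inter,
    Real.volume_Icc_pi]
  exact pos_iff_ne_zero.2 (Finset.prod_ne_zero_iff.2 fun i _ =>
    (ENNReal.ofReal_pos.2 (sub_pos.2 hab)).ne')

variable {w : EuclideanSpace ℝ (Fin n) → ℝ}

lemma contDiff_comp_toLp (hw : ContDiff ℝ 1 w) :
    ContDiff ℝ 1 fun x : Fin n → ℝ => w (WithLp.toLp 2 x) :=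
  hw.comp PiLp.contDiff_toLp

lemma fderiv_rpow_comp_toLp (hw : Differentiable ℝ w) (hwpos : ∀ x, 0 < w x) (p : ℝ)
    (x y : Fin n → ℝ) :
    fderiv ℝ (fun x => w (WithLp.toLp 2 x) ^ p) x y = p * w (WithLp.toLp 2 x) ^ (p - 1) *
      fderiv ℝ w (WithLp.toLp 2 x) (WithLp.toLp 2 y) := by
  have hcomp : HasFDerivAt (fun x => w (WithLp.toLp 2 x)) _ x :=
    (hw _).hasFDerivAt.comp x (PiLp.hasFDerivAt_toLp 2 x)
  rw [(hcomp.rpow_const (p := p) (.inl (hwpos _).ne')).fderiv]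
  rfl

lemma neg_setIntegral_fderiv_rpow_le (hn : 2 < n) (hw : ContDiff ℝ 1 w) (hwpos : ∀ x, 0 < w x)
    {T : (Fin n → ℝ) → Fin n → ℝ} (hT : Continuous T) :
    -∫ x in cube n a b, fderiv ℝ (fun x => w (WithLp.toLp 2 x) ^ traceExp n) x (T x) ≤
      traceExp n * (√(∫ x in cube n a b, ‖fderiv ℝ w (WithLp.toLp 2 x)‖ ^ 2) *
        √(∫ x in cube n a b, ‖WithLp.toLp 2 (T x)‖ ^ 2 * w (WithLp.toLp 2 x) ^ critExp n)) := by
  have hwc : Continuous fun x : Fin n → ℝ => w (WithLp.toLp 2 x) :=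
    (contDiff_comp_toLp hw).continuous
  have hw' : Continuous fun x : Fin n → ℝ => fderiv ℝ w (WithLp.toLp 2 x) :=
    (hw.continuous_fderiv one_ne_zero).comp (PiLp.continuous_toLp 2 _)
  have hTE : Continuous fun x => WithLp.toLp 2 (T x) := (PiLp.continuous_toLp 2 _).comp hT
  have hwp : Continuous fun x : Fin n → ℝ => w (WithLp.toLp 2 x) ^ (traceExp n - 1) :=
    hwc.rpow_const fun x => .inl (hwpos _).ne'
  have hTw : Continuous fun x => ‖WithLp.toLp 2 (T x)‖ * w (WithLp.toLp 2 x) ^ (traceExp n - 1) :=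
    hTE.norm.mul hwp
  have hsq (x : Fin n → ℝ) : (‖WithLp.toLp 2 (T x)‖ * w (WithLp.toLp 2 x) ^ (traceExp n - 1)) ^ 2 =
      ‖WithLp.toLp 2 (T x)‖ ^ 2 * w (WithLp.toLp 2 x) ^ critExp n := by
    rw [mul_pow, ← rpow_mul_natCast (hwpos _).le, mul_comm (_ - 1), Nat.cast_two,
      two_mul_traceExp_sub_one hn]
  have hcs := integral_mul_le_sqrt_mul_sqrt (μ := volume.restrict (cube n a b))
    (fun x => norm_nonneg (fderiv ℝ w (WithLp.toLp 2 x)))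
    (fun x => mul_nonneg (norm_nonneg (WithLp.toLp 2 (T x))) (rpow_nonneg (hwpos _).le _))
    (memLp_two_restrict_cube hw'.norm) (memLp_two_restrict_cube hTw)
  simp only [hsq] at hcs
  refine le_trans ?_ (mul_le_mul_of_nonneg_left hcs (traceExp_pos hn).le)
  simp only [fderiv_rpow_comp_toLp (hw.differentiable one_ne_zero) hwpos]
  rw [← integral_neg, ← integral_const_mul]
  refine integral_mono ((continuous_const.mul hwp).mul (hw'.clm_apply hTE)).neg.integrableOn_Icc
    (continuous_const.mul (hw'.norm.mul hTw)).integrableOn_Icc fun x => ?_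
  have hop := (neg_le_abs _).trans
    ((fderiv ℝ w (WithLp.toLp 2 x)).le_opNorm (WithLp.toLp 2 (T x)))
  have hc : 0 ≤ traceExp n * w (WithLp.toLp 2 x) ^ (traceExp n - 1) :=
    mul_nonneg (traceExp_pos hn).le (rpow_nonneg (hwpos _).le _)
  linear_combination mul_le_mul_of_nonneg_left hop hc

variable {G : EuclideanSpace ℝ (Fin n) → ℝ}

lemma cube_sobolev_duality_of_pos (hn : 2 < n) (hab : a < b) (hw : ContDiff ℝ 1 w)
    (hwpos : ∀ x, 0 < w x) {ε : ℝ} (hε : 0 ≤ ε)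
    (hbd : ∀ x : Fin n → ℝ, ∀ i, x i = a ∨ x i = b → w (WithLp.toLp 2 x) = ε)
    (hG : Continuous G) (hGpos : ∀ x, 0 < G x) {κ : ℝ} (hκ : 0 < κ)
    (hmass : ∫ x in cube n a b, w (WithLp.toLp 2 x) ^ critExp n =
      κ * ∫ x in cube n a b, G (WithLp.toLp 2 x)) :
    κ ^ (1 - 1 / (n : ℝ)) * ∫ x in cube n a b, G (WithLp.toLp 2 x) ^ (1 - 1 / (n : ℝ)) ≤
      (b - a) ^ n * ε ^ traceExp n + traceExp n / n *
        (√(∫ x in cube n a b, ‖fderiv ℝ w (WithLp.toLp 2 x)‖ ^ 2) *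
          √(κ * ∫ x in cube n a b, ‖WithLp.toLp 2 x‖ ^ 2 * G (WithLp.toLp 2 x))) := by
  have : NeZero n := ⟨by omega⟩
  have hwc : Continuous fun x : Fin n → ℝ => w (WithLp.toLp 2 x) ^ critExp n :=
    (contDiff_comp_toLp hw).continuous.rpow_const fun x => .inl (hwpos _).ne'
  have hκG : Continuous fun x : Fin n → ℝ => κ * G (WithLp.toLp 2 x) :=
    continuous_const.mul (hG.comp (PiLp.continuous_toLp 2 _))
  have hwQ (x : Fin n → ℝ) : 0 < w (WithLp.toLp 2 x) ^ critExp n := rpow_pos_of_pos (hwpos _) _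
  have hκGpos (x : Fin n → ℝ) : 0 < κ * G (WithLp.toLp 2 x) := mul_pos hκ (hGpos _)
  obtain ⟨T, lam, h⟩ := exists_isKnotheMap hab hwc hκG hwQ hκGpos
    (by rw [hmass, integral_const_mul])
  have hmain := h.setIntegral_rpow_le hab.le hwc hκG hwQ hκGpos
    ((contDiff_comp_toLp hw).rpow_const_of_ne fun x => (hwpos _).ne')
    (fun x => by rw [← rpow_mul (hwpos _).le, critExp_mul_one_sub_inv hn])
    (rpow_nonneg hε _) fun x i hx => by rw [hbd x i hx]
  have hgrad := neg_setIntegral_fderiv_rpow_le (a := a) (b := b) hn hw hwpos h.continuous_map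
  rw [h.integral_comp_mul_density hκG (ψ := fun y => ‖WithLp.toLp 2 y‖ ^ 2)
    ((PiLp.continuous_toLp 2 _).norm.pow 2)] at hgrad
  simp only [mul_rpow hκ.le (hGpos _).le, integral_const_mul, mul_left_comm _ κ] at hmain hgrad
  have hn' : 0 < 1 / (n : ℝ) := by positivity
  linear_combination hmain + mul_le_mul_of_nonneg_left hgrad hn'.le

lemma cube_sobolev_duality (hn : 2 < n) (hab : a < b) (hw : ContDiff ℝ 1 w) (hw0 : ∀ x, 0 ≤ w x)
    (hbd : ∀ x : Fin n → ℝ, ∀ i, x i = a ∨ x i = b → w (WithLp.toLp 2 x) = 0)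
    (hG : Continuous G) (hGpos : ∀ x, 0 < G x) :
    ((∫ x in cube n a b, w (WithLp.toLp 2 x) ^ critExp n) / ∫ x in cube n a b, G (WithLp.toLp 2 x))
        ^ (1 - 1 / (n : ℝ)) * ∫ x in cube n a b, G (WithLp.toLp 2 x) ^ (1 - 1 / (n : ℝ)) ≤
      traceExp n / n * (√(∫ x in cube n a b, ‖fderiv ℝ w (WithLp.toLp 2 x)‖ ^ 2) *
        √((∫ x in cube n a b, w (WithLp.toLp 2 x) ^ critExp n) /
          (∫ x in cube n a b, G (WithLp.toLp 2 x)) *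
            ∫ x in cube n a b, ‖WithLp.toLp 2 x‖ ^ 2 * G (WithLp.toLp 2 x))) := by
  let κ (ε : ℝ) : ℝ := (∫ x in cube n a b, (w (WithLp.toLp 2 x) + ε) ^ critExp n) /
    ∫ x in cube n a b, G (WithLp.toLp 2 x)
  have hM : 0 < ∫ x in cube n a b, G (WithLp.toLp 2 x) :=
    setIntegral_cube_pos hab (hG.comp (PiLp.continuous_toLp 2 _)) fun x => hGpos _
  have hκ0 : Tendsto κ (𝓝[>] 0) (𝓝 (κ 0)) := by
    refine ((continuous_parametric_integral_of_continuous ?_ isCompact_Icc).div_const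
      _).continuousWithinAt
    exact (((contDiff_comp_toLp hw).continuous.comp continuous_snd).add continuous_fst).rpow_const
      fun _ => .inr (critExp_pos hn).le
  have hε0 : Tendsto (fun ε : ℝ => ε ^ traceExp n) (𝓝[>] 0) (𝓝 0) := by
    simpa only [zero_rpow (traceExp_pos hn).ne'] using
      (continuousAt_rpow_const 0 _ (.inr (traceExp_pos hn).le)).continuousWithinAt.tendsto
  have hexp : 0 ≤ 1 - 1 / (n : ℝ) := sub_nonneg.2 (div_le_self zero_le_one (mod_cast by omega))
  have hle : ∀ᶠ ε in 𝓝[>] 0, κ ε ^ (1 - 1 / (n : ℝ)) *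
      ∫ x in cube n a b, G (WithLp.toLp 2 x) ^ (1 - 1 / (n : ℝ)) ≤
      (b - a) ^ n * ε ^ traceExp n + traceExp n / n *
        (√(∫ x in cube n a b, ‖fderiv ℝ w (WithLp.toLp 2 x)‖ ^ 2) *
          √(κ ε * ∫ x in cube n a b, ‖WithLp.toLp 2 x‖ ^ 2 * G (WithLp.toLp 2 x))) := by
    filter_upwards [self_mem_nhdsWithin] with ε (hε : 0 < ε)
    have hwε : ContDiff ℝ 1 fun x => w x + ε := hw.add contDiff_const
    have hwpos (x) : 0 < w x + ε := add_pos_of_nonneg_of_pos (hw0 x) hε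
    have hκpos : 0 < κ ε := div_pos (setIntegral_cube_pos hab
      ((contDiff_comp_toLp hwε).continuous.rpow_const fun x => .inl (hwpos _).ne')
      fun x => rpow_pos_of_pos (hwpos _) _) hM
    simpa only [fderiv_add_const] using cube_sobolev_duality_of_pos hn hab hwε hwpos hε.le
      (fun x i hx => by rw [hbd x i hx, zero_add]) hG hGpos hκpos (div_mul_cancel₀ _ hM.ne').symm
  have hlim := le_of_tendsto_of_tendsto ((hκ0.rpow_const (.inr hexp)).mul_const _)
    ((hε0.const_mul _).add (((hκ0.mul_const _).sqrt.const_mul _).const_mul _)) hle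
  simpa only [κ, add_zero, zero_add, mul_zero] using hlim

lemma tendsto_setIntegral_cube {f : EuclideanSpace ℝ (Fin n) → ℝ} (hf : Integrable f) :
    Tendsto (fun L : ℕ => ∫ x in cube n (-L) L, f (WithLp.toLp 2 x)) atTop (𝓝 (∫ x, f x)) := by
  have hemb := (MeasurableEquiv.toLp 2 (Fin n → ℝ)).measurableEmbedding
  have htoLp := PiLp.volume_preserving_toLp (Fin n)
  have hcover : ⋃ L : ℕ, cube n (-L) L = univ := by
    refine eq_univ_of_forall fun x => mem_iUnion.2 ?_
    obtain ⟨L, hL⟩ := exists_nat_ge ‖x‖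
    have hx (i : Fin n) : |x i| ≤ L := (norm_le_pi_norm x i).trans hL
    exact ⟨L, fun i => (abs_le.1 (hx i)).1, fun i => (abs_le.1 (hx i)).2⟩
  have hmono : Monotone fun L : ℕ => cube n (-L) L := fun L L' hL =>
    Icc_subset_Icc (fun _ => neg_le_neg (Nat.cast_le.2 hL)) fun _ => Nat.cast_le.2 hL
  have hlim := tendsto_setIntegral_of_monotone (f := fun x => f (WithLp.toLp 2 x))
    (fun L : ℕ => measurableSet_Icc) hmono ((htoLp.integrable_comp_emb hemb).2 hf).integrableOn
  rwa [hcover, setIntegral_univ, htoLp.integral_comp hemb] at hlim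

lemma eventually_eq_zero_of_abs_apply_eq (hw : HasCompactSupport w) :
    ∀ᶠ L : ℕ in atTop, ∀ x i, |x i| = (L : ℝ) → w x = 0 := by
  obtain ⟨R, hR⟩ := hw.isCompact.isBounded.subset_closedBall 0
  filter_upwards [tendsto_natCast_atTop_atTop.eventually_gt_atTop R] with L hL x i hx
  refine image_eq_zero_of_notMem_tsupport fun hmem => (PiLp.norm_apply_le x i).not_gt ?_
  rw [Real.norm_eq_abs, hx]
  exact (mem_closedBall_zero_iff.1 (hR hmem)).trans_lt hL

lemma integrable_rpow_const_of_hasCompactSupport {X : Type*} [TopologicalSpace X]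
    [MeasurableSpace X] [OpensMeasurableSpace X] {μ : Measure X} [IsFiniteMeasureOnCompacts μ]
    {f : X → ℝ} (hfc : HasCompactSupport f) (hf : Continuous f) {p : ℝ} (hp : 0 < p) :
    Integrable (fun x => f x ^ p) μ :=
  (hf.rpow_const fun _ => .inr hp.le).integrable_of_hasCompactSupport
    (hfc.comp_left (g := (· ^ p)) (zero_rpow hp.ne'))

lemma integrable_norm_fderiv_sq_of_hasCompactSupport {V : Type*} [NormedAddCommGroup V]
    [NormedSpace ℝ V] [MeasurableSpace V] [OpensMeasurableSpace V] {μ : Measure V}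
    [IsFiniteMeasureOnCompacts μ] {f : V → ℝ} (hfc : HasCompactSupport f) (hf : ContDiff ℝ 1 f) :
    Integrable (fun x => ‖fderiv ℝ f x‖ ^ 2) μ := by
  have hc : Continuous fun x => ‖fderiv ℝ f x‖ ^ 2 := (hf.continuous_fderiv one_ne_zero).norm.pow 2
  exact hc.integrable_of_hasCompactSupport
    (HasCompactSupport.comp_left (g := (· ^ 2)) (hfc.fderiv ℝ).norm (zero_pow two_ne_zero))

lemma integral_pos_of_forall_pos {X : Type*} [MeasurableSpace X] {μ : Measure X} [NeZero μ]
    {f : X → ℝ} (hf : ∀ x, 0 < f x) (hfi : Integrable f μ) : 0 < ∫ x, f x ∂μ := by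
  rw [integral_pos_iff_support_of_nonneg (fun x => (hf x).le) hfi,
    Function.support_eq_univ fun x => (hf x).ne']
  exact Measure.measure_univ_pos.2 (NeZero.ne μ)

theorem sobolev_duality (hn : 2 < n) (hw : ContDiff ℝ 1 w) (hw0 : ∀ x, 0 ≤ w x)
    (hwc : HasCompactSupport w) (hG : Continuous G) (hGpos : ∀ x, 0 < G x) (hGint : Integrable G)
    (hGrpow : Integrable fun x => G x ^ (1 - 1 / (n : ℝ)))
    (hGsq : Integrable fun x => ‖x‖ ^ 2 * G x) :
    ((∫ x, w x ^ critExp n) / ∫ x, G x) ^ (1 - 1 / (n : ℝ)) * ∫ x, G x ^ (1 - 1 / (n : ℝ)) ≤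
      traceExp n / n * (√(∫ x, ‖fderiv ℝ w x‖ ^ 2) *
        √((∫ x, w x ^ critExp n) / (∫ x, G x) * ∫ x, ‖x‖ ^ 2 * G x)) := by
  have hM := integral_pos_of_forall_pos hGpos hGint
  have hexp : 0 ≤ 1 - 1 / (n : ℝ) := sub_nonneg.2 (div_le_self zero_le_one (mod_cast by omega))
  have hwQ := integrable_rpow_const_of_hasCompactSupport (μ := volume) hwc hw.continuous
    (critExp_pos hn)
  have hD := integrable_norm_fderiv_sq_of_hasCompactSupport (μ := volume) hwc hw
  have hratio := (tendsto_setIntegral_cube hwQ).div (tendsto_setIntegral_cube hGint) hM.ne'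
  refine le_of_tendsto_of_tendsto
    ((hratio.rpow_const (.inr hexp)).mul (tendsto_setIntegral_cube hGrpow))
    (((tendsto_setIntegral_cube hD).sqrt.mul
      (hratio.mul (tendsto_setIntegral_cube hGsq)).sqrt).const_mul _) ?_
  filter_upwards [eventually_eq_zero_of_abs_apply_eq hwc, eventually_gt_atTop 0] with L hL hLpos
  have hLpos' : (0 : ℝ) < L := mod_cast hLpos
  refine cube_sobolev_duality hn (by linarith) hw hw0 (fun x i hx => hL _ i ?_) hG hGpos
  rcases hx with hx | hx <;> simp [hx]

end SobolevDuality

section Bubble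

open Set

lemma lintegral_ofReal_eq_of_integral_eq {α : Type*} [MeasurableSpace α] {μ : Measure α}
    {f : α → ℝ} {c : ℝ} (hc : c ≠ 0) (hf : 0 ≤ᵐ[μ] f) (h : ∫ x, f x ∂μ = c) :
    ∫⁻ x, ENNReal.ofReal (f x) ∂μ = ENNReal.ofReal c := by
  rw [← h, ofReal_integral_eq_lintegral_ofReal (.of_integral_ne_zero (h ▸ hc)) hf]

lemma norm_sq_mul_one_add_norm_sq_rpow_neg {V : Type*} [SeminormedAddGroup V] (y : V) (a : ℝ) :
    ‖y‖ ^ 2 * (1 + ‖y‖ ^ 2) ^ (-a) = (1 + ‖y‖ ^ 2) ^ (-(a - 1)) - (1 + ‖y‖ ^ 2) ^ (-a) := by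
  rw [neg_sub', sub_neg_eq_add, rpow_add_one (by positivity)]
  ring

variable {V : Type*} [NormedAddCommGroup V] [InnerProductSpace ℝ V] [FiniteDimensional ℝ V]
  [MeasurableSpace V] [BorelSpace V]

lemma integrable_one_add_norm_sq_rpow_neg {a : ℝ} (ha : Module.finrank ℝ V / 2 < a) :
    Integrable fun y : V => (1 + ‖y‖ ^ 2) ^ (-a) := by
  have h := integrable_rpow_neg_one_add_norm_sq (E := V) (μ := volume) (r := 2 * a) (by linarith)
  rwa [neg_div, mul_div_cancel_left₀ a two_ne_zero] at h

lemma integral_rpow_mul_exp_neg_one_add_norm_sq_mul {t : ℝ} (ht : 0 < t) (a : ℝ) :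
    ∫ y : V, t ^ (a - 1) * exp (-((1 + ‖y‖ ^ 2) * t)) =
      π ^ (Module.finrank ℝ V / 2 : ℝ) *
        (t ^ (a - Module.finrank ℝ V / 2 - 1) * exp (-(1 * t))) := by
  have hsplit (y : V) : t ^ (a - 1) * exp (-((1 + ‖y‖ ^ 2) * t)) =
      t ^ (a - 1) * exp (-(1 * t)) * exp (-t * ‖y‖ ^ 2) := by
    rw [mul_assoc, ← exp_add]
    congr 2
    ring
  simp only [hsplit]
  rw [integral_const_mul, GaussianFourier.integral_rexp_neg_mul_sq_norm ht,
    div_rpow pi_pos.le ht.le, sub_right_comm, rpow_sub ht (a - 1)]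
  ring

/- Write `(1 + ‖y‖²) ^ (-a) Γ(a)` as the Laplace transform of `t ^ (a - 1)` at `1 + ‖y‖²` and
exchange the integrals: the inner one becomes Gaussian. -/
lemma integral_one_add_norm_sq_rpow_neg {a : ℝ} (ha : Module.finrank ℝ V / 2 < a) :
    ∫ y : V, (1 + ‖y‖ ^ 2) ^ (-a) =
      π ^ (Module.finrank ℝ V / 2 : ℝ) * Gamma (a - Module.finrank ℝ V / 2) / Gamma a := by
  have ha0 : 0 < a := lt_of_le_of_lt (by positivity) ha
  have hΓ := Gamma_pos_of_pos ha0
  have hpos : 0 < π ^ (Module.finrank ℝ V / 2 : ℝ) * Gamma (a - Module.finrank ℝ V / 2) :=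
    mul_pos (rpow_pos_of_pos pi_pos _) (Gamma_pos_of_pos (sub_pos.2 ha))
  have hbase (y : V) : 0 < 1 + ‖y‖ ^ 2 := by positivity
  have hlaplace (y : V) :
      ∫⁻ t in Ioi (0 : ℝ), ENNReal.ofReal (t ^ (a - 1) * exp (-((1 + ‖y‖ ^ 2) * t))) =
        ENNReal.ofReal ((1 + ‖y‖ ^ 2) ^ (-a) * Gamma a) := by
    refine lintegral_ofReal_eq_of_integral_eq (by positivity) ?_ ?_
    · exact ae_restrict_of_forall_mem measurableSet_Ioi fun t ht =>
        mul_nonneg (rpow_nonneg (le_of_lt ht) _) (exp_pos _).le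
    · rw [integral_rpow_mul_exp_neg_mul_Ioi ha0 (hbase y), one_div, inv_rpow (hbase y).le,
        rpow_neg (hbase y).le]
  have hgauss : ∀ t ∈ Ioi (0 : ℝ),
      ∫⁻ y : V, ENNReal.ofReal (t ^ (a - 1) * exp (-((1 + ‖y‖ ^ 2) * t))) =
        ENNReal.ofReal (π ^ (Module.finrank ℝ V / 2 : ℝ) *
          (t ^ (a - Module.finrank ℝ V / 2 - 1) * exp (-(1 * t)))) := fun t (ht : 0 < t) =>
    lintegral_ofReal_eq_of_integral_eq (by positivity) (.of_forall fun y => by positivity)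
      (integral_rpow_mul_exp_neg_one_add_norm_sq_mul ht a)
  have hswap : ∫⁻ y : V, ENNReal.ofReal ((1 + ‖y‖ ^ 2) ^ (-a) * Gamma a) =
      ENNReal.ofReal (π ^ (Module.finrank ℝ V / 2 : ℝ) * Gamma (a - Module.finrank ℝ V / 2)) := by
    simp only [← hlaplace]
    rw [lintegral_lintegral_swap (Measurable.aemeasurable (by unfold Function.uncurry; fun_prop)),
      setLIntegral_congr_fun measurableSet_Ioi hgauss]
    refine lintegral_ofReal_eq_of_integral_eq hpos.ne' ?_ ?_
    · exact ae_restrict_of_forall_mem measurableSet_Ioi fun t (ht : 0 < t) => by positivity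
    · rw [integral_const_mul, integral_rpow_mul_exp_neg_mul_Ioi (sub_pos.2 ha) one_pos, one_div_one,
        one_rpow, one_mul]
  rw [eq_div_iff hΓ.ne', ← integral_mul_const, integral_eq_lintegral_of_nonneg_ae
    (.of_forall fun y => by positivity)
    ((integrable_one_add_norm_sq_rpow_neg ha).mul_const _).aestronglyMeasurable, hswap,
    ENNReal.toReal_ofReal hpos.le]

lemma integrable_norm_sq_mul_one_add_norm_sq_rpow_neg {a : ℝ}
    (ha : Module.finrank ℝ V / 2 < a - 1) :
    Integrable fun y : V => ‖y‖ ^ 2 * (1 + ‖y‖ ^ 2) ^ (-a) := by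
  simp only [norm_sq_mul_one_add_norm_sq_rpow_neg]
  exact (integrable_one_add_norm_sq_rpow_neg ha).sub
    (integrable_one_add_norm_sq_rpow_neg (by linarith))

lemma mul_integral_one_add_norm_sq_rpow_neg_sub_one {a : ℝ}
    (ha : Module.finrank ℝ V / 2 < a - 1) :
    (a - 1 - Module.finrank ℝ V / 2) * ∫ y : V, (1 + ‖y‖ ^ 2) ^ (-(a - 1)) =
      (a - 1) * ∫ y : V, (1 + ‖y‖ ^ 2) ^ (-a) := by
  have ha1 : 0 < a - 1 := lt_of_le_of_lt (by positivity) ha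
  have hΓ := (Gamma_pos_of_pos ha1).ne'
  have hrec := Gamma_add_one ha1.ne'
  have hrec' := Gamma_add_one (sub_pos.2 ha).ne'
  rw [sub_add_cancel] at hrec
  rw [sub_right_comm a, sub_add_cancel, ← sub_right_comm a] at hrec'
  rw [integral_one_add_norm_sq_rpow_neg ha, integral_one_add_norm_sq_rpow_neg (by linarith), hrec,
    hrec', mul_div_mul_comm]
  field_simp

lemma mul_integral_norm_sq_mul_one_add_norm_sq_rpow_neg {a : ℝ}
    (ha : Module.finrank ℝ V / 2 < a - 1) :
    (a - 1 - Module.finrank ℝ V / 2) * ∫ y : V, ‖y‖ ^ 2 * (1 + ‖y‖ ^ 2) ^ (-a) =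
      Module.finrank ℝ V / 2 * ∫ y : V, (1 + ‖y‖ ^ 2) ^ (-a) := by
  simp only [norm_sq_mul_one_add_norm_sq_rpow_neg]
  rw [integral_sub (integrable_one_add_norm_sq_rpow_neg ha)
    (integrable_one_add_norm_sq_rpow_neg (by linarith)), mul_sub,
    mul_integral_one_add_norm_sq_rpow_neg_sub_one ha]
  ring

end Bubble

section CompactSupport

variable {n : ℕ}

/-- The total mass of the bubble `(1 + ‖y‖²) ^ (-n)`, the density proportional to the `2*`-th power
of the Aubin–Talenti extremal functions, which serves as the target of the transport. -/
def bubbleMass (n : ℕ) : ℝ := ∫ y : EuclideanSpace ℝ (Fin n), (1 + ‖y‖ ^ 2) ^ (-(n : ℝ))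

lemma bubbleMass_eq (hn : 0 < n) :
    bubbleMass n = π ^ (n / 2 : ℝ) * Gamma (n / 2) / Gamma n := by
  have hn' : (0 : ℝ) < n := mod_cast hn
  simpa only [bubbleMass, finrank_euclideanSpace_fin, sub_half] using
    integral_one_add_norm_sq_rpow_neg (V := EuclideanSpace ℝ (Fin n)) (a := n)
      (by rw [finrank_euclideanSpace_fin]; linarith)

lemma bubbleMass_pos (hn : 0 < n) : 0 < bubbleMass n := by
  rw [bubbleMass_eq hn]
  positivity

lemma bubbleMass_rpow_eq_inv_sobolevConst (hn : 0 < n) :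
    n * (n - 2) * bubbleMass n ^ (2 / n : ℝ) = (sobolevConst n)⁻¹ := by
  have hpi : (π ^ (n / 2 : ℝ)) ^ (2 / n : ℝ) = π := by
    rw [← rpow_mul pi_pos.le, div_mul_div_cancel₀ two_ne_zero, div_self (mod_cast hn.ne'), rpow_one]
  rw [bubbleMass_eq hn, mul_div_assoc, mul_rpow (by positivity) (by positivity), hpi, sobolevConst,
    mul_inv, ← inv_rpow (by positivity), inv_div, inv_div, div_one]
  ring

lemma sobolevConst_pos (hn : 2 < n) : 0 < sobolevConst n := by
  have : (2 : ℝ) < n := mod_cast hn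
  rw [← inv_pos, ← bubbleMass_rpow_eq_inv_sobolevConst (by omega)]
  have := bubbleMass_pos (n := n) (by omega)
  have : 0 < (n : ℝ) - 2 := by linarith
  positivity

lemma finrank_euclideanSpace_div_two_lt (hn : 2 < n) :
    (Module.finrank ℝ (EuclideanSpace ℝ (Fin n)) / 2 : ℝ) < n - 1 := by
  have : (2 : ℝ) < n := mod_cast hn
  rw [finrank_euclideanSpace_fin]
  linarith

lemma integral_bubble_rpow (hn : 2 < n) :
    ∫ y : EuclideanSpace ℝ (Fin n), (1 + ‖y‖ ^ 2) ^ (-((n : ℝ) - 1)) =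
      traceExp n * bubbleMass n := by
  have : (2 : ℝ) < n := mod_cast hn
  have h := mul_integral_one_add_norm_sq_rpow_neg_sub_one (finrank_euclideanSpace_div_two_lt hn)
  rw [finrank_euclideanSpace_fin] at h
  rw [traceExp, div_mul_eq_mul_div, eq_div_iff (by linarith), bubbleMass]
  linear_combination 2 * h

lemma integral_norm_sq_mul_bubble (hn : 2 < n) :
    ∫ y : EuclideanSpace ℝ (Fin n), ‖y‖ ^ 2 * (1 + ‖y‖ ^ 2) ^ (-(n : ℝ)) =
      n / (n - 2) * bubbleMass n := by
  have : (2 : ℝ) < n := mod_cast hn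
  have h := mul_integral_norm_sq_mul_one_add_norm_sq_rpow_neg (finrank_euclideanSpace_div_two_lt hn)
  rw [finrank_euclideanSpace_fin] at h
  rw [div_mul_eq_mul_div, eq_div_iff (by linarith), bubbleMass]
  linear_combination 2 * h

variable {w : EuclideanSpace ℝ (Fin n) → ℝ}

lemma sobolev_duality_bubble (hn : 2 < n) (hw : ContDiff ℝ 1 w) (hw0 : ∀ x, 0 ≤ w x)
    (hwc : HasCompactSupport w) :
    ((∫ x, w x ^ critExp n) / bubbleMass n) ^ (1 - 1 / n : ℝ) * bubbleMass n ≤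
      1 / n * (√(∫ x, ‖fderiv ℝ w x‖ ^ 2) * √((∫ x, w x ^ critExp n) * (n / (n - 2)))) := by
  have hM := bubbleMass_pos (n := n) (by omega)
  have hdim := finrank_euclideanSpace_div_two_lt hn
  have hbase (y : EuclideanSpace ℝ (Fin n)) : 0 < 1 + ‖y‖ ^ 2 := by positivity
  have hrpow (y : EuclideanSpace ℝ (Fin n)) :
      ((1 + ‖y‖ ^ 2) ^ (-(n : ℝ))) ^ (1 - 1 / n : ℝ) = (1 + ‖y‖ ^ 2) ^ (-((n : ℝ) - 1)) := by
    rw [← rpow_mul (hbase y).le]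
    congr 1
    field_simp
  have h := sobolev_duality hn hw hw0 hwc (G := fun y => (1 + ‖y‖ ^ 2) ^ (-(n : ℝ)))
    (.rpow_const (by fun_prop) fun y => .inl (hbase y).ne') (fun y => rpow_pos_of_pos (hbase y) _)
    (integrable_one_add_norm_sq_rpow_neg (by linarith))
    (by simpa only [hrpow] using integrable_one_add_norm_sq_rpow_neg hdim)
    (integrable_norm_sq_mul_one_add_norm_sq_rpow_neg hdim)
  simp only [hrpow] at h
  rw [integral_bubble_rpow hn, integral_norm_sq_mul_bubble hn, ← bubbleMass,
    mul_left_comm (_ / bubbleMass n), div_mul_cancel₀ _ hM.ne', mul_comm (n / (n - 2) : ℝ)] at h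
  refine le_of_mul_le_mul_left ?_ (traceExp_pos hn)
  linear_combination h

/- Squaring the duality inequality leaves one surplus factor `∫ w ^ 2*` on each side. -/
theorem sobolev_inequality_of_hasCompactSupport (hn : 2 < n) (hw : ContDiff ℝ 1 w)
    (hw0 : ∀ x, 0 ≤ w x) (hwc : HasCompactSupport w) :
    (∫ x, w x ^ critExp n) ^ (1 - 2 / n : ℝ) ≤ sobolevConst n * ∫ x, ‖fderiv ℝ w x‖ ^ 2 := by
  have hn' : (2 : ℝ) < n := mod_cast hn
  have hM := bubbleMass_pos (n := n) (by omega)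
  have hdual := sobolev_duality_bubble hn hw hw0 hwc
  have hD : 0 ≤ ∫ x, ‖fderiv ℝ w x‖ ^ 2 := integral_nonneg fun x => sq_nonneg _
  have hm0 : 0 ≤ ∫ x, w x ^ critExp n := integral_nonneg fun x => rpow_nonneg (hw0 x) _
  rw [← inv_mul_le_iff₀ (sobolevConst_pos hn), ← bubbleMass_rpow_eq_inv_sobolevConst (by omega)]
  generalize ∫ x, w x ^ critExp n = m at *
  generalize ∫ x, ‖fderiv ℝ w x‖ ^ 2 = D at *
  generalize bubbleMass n = M at *
  have hn2 : 0 < (n : ℝ) - 2 := sub_pos.2 hn'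
  obtain rfl | hm := hm0.eq_or_lt
  · rw [zero_rpow (sub_pos.2 ((div_lt_one (by linarith)).2 hn')).ne', mul_zero]
    exact hD
  have hlhs : ((m / M) ^ (1 - 1 / n : ℝ) * M) ^ 2 =
      m * (m ^ (1 - 2 / n : ℝ) * M ^ (2 / n : ℝ)) := by
    have hexp : (1 - 1 / n : ℝ) * (2 : ℕ) = 1 + (1 - 2 / n) := by
      push_cast
      ring
    rw [mul_pow, ← rpow_mul_natCast (by positivity), hexp, rpow_add (by positivity), rpow_one,
      div_rpow hm.le hM.le, rpow_sub hM, rpow_one]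
    field_simp
  have hrhs : (1 / n * (√D * √(m * (n / (n - 2))))) ^ 2 = m * (D / (n * (n - 2))) := by
    rw [mul_pow, mul_pow, sq_sqrt hD, sq_sqrt (by positivity)]
    field_simp
  have hsq := pow_le_pow_left₀ (by positivity) hdual 2
  rw [hlhs, hrhs] at hsq
  have hle := (le_div_iff₀ (by positivity)).1 (le_of_mul_le_mul_left hsq hm)
  linear_combination hle

end CompactSupport

section Cutoff

open Set Filter Topology

lemma integral_mul_le_setIntegral_rpow_mul_integral_rpow {α : Type*} [MeasurableSpace α]
    {μ : Measure α} {p q : ℝ} (hpq : p.HolderConjugate q) {f g : α → ℝ} (hf0 : 0 ≤ f)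
    (hg0 : 0 ≤ g) (hf : MemLp f (ENNReal.ofReal p) μ) (hg : MemLp g (ENNReal.ofReal q) μ)
    {s : Set α} (hgs : ∀ x ∉ s, g x = 0) :
    ∫ x, f x * g x ∂μ ≤ (∫ x in s, f x ^ p ∂μ) ^ (1 / p) * (∫ x, g x ^ q ∂μ) ^ (1 / q) := by
  have hfg : ∫ x in s, f x * g x ∂μ = ∫ x, f x * g x ∂μ :=
    setIntegral_eq_integral_of_forall_compl_eq_zero fun x hx => by rw [hgs x hx, mul_zero]
  have hgq : ∫ x in s, g x ^ q ∂μ = ∫ x, g x ^ q ∂μ :=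
    setIntegral_eq_integral_of_forall_compl_eq_zero fun x hx => by
      rw [hgs x hx, zero_rpow hpq.symm.ne_zero]
  rw [← hfg, ← hgq]
  exact integral_mul_le_Lp_mul_Lq_of_nonneg hpq (.of_forall hf0) (.of_forall hg0) (hf.restrict s)
    (hg.restrict s)

lemma tendsto_setIntegral_le_norm_atTop {E : Type*} [NormedAddCommGroup E] [MeasurableSpace E]
    [OpensMeasurableSpace E] {μ : Measure E} {f : E → ℝ} (hf : Integrable f μ) :
    Tendsto (fun R : ℝ => ∫ x in {x | R ≤ ‖x‖}, f x ∂μ) atTop (𝓝 0) := by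
  have hempty : ⋂ R : ℝ, {x : E | R ≤ ‖x‖} = ∅ := by
    refine eq_empty_of_forall_notMem fun x hx => ?_
    obtain ⟨R, hR⟩ := exists_gt ‖x‖
    exact hR.not_ge (mem_iInter.1 hx R)
  have h := tendsto_setIntegral_of_antitone (μ := μ) (f := f) (s := fun R : ℝ => {x : E | R ≤ ‖x‖})
    (fun R => (isClosed_le continuous_const continuous_norm).measurableSet)
    (fun R R' hR x hx => le_trans hR hx) ⟨0, hf.integrableOn⟩
  rwa [hempty, setIntegral_empty] at h

lemma norm_fderiv_mul_sq_le {E : Type*} [NormedAddCommGroup E] [NormedSpace ℝ E] {χ u : E → ℝ}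
    {x : E} (hχ : DifferentiableAt ℝ χ x) (hu : DifferentiableAt ℝ u x) (hχ0 : 0 ≤ χ x)
    (hχ1 : χ x ≤ 1) {δ : ℝ} (hδ : 0 < δ) :
    ‖fderiv ℝ (fun x => χ x * u x) x‖ ^ 2 ≤
      (1 + δ) * ‖fderiv ℝ u x‖ ^ 2 + (1 + 1 / δ) * (u x ^ 2 * ‖fderiv ℝ χ x‖ ^ 2) := by
  rw [fderiv_fun_mul hχ hu]
  have htri : ‖χ x • fderiv ℝ u x + u x • fderiv ℝ χ x‖ ≤
      ‖fderiv ℝ u x‖ + |u x| * ‖fderiv ℝ χ x‖ := by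
    refine (norm_add_le _ _).trans ?_
    rw [norm_smul, norm_smul, norm_of_nonneg hχ0, Real.norm_eq_abs]
    gcongr
    exact mul_le_of_le_one_left (norm_nonneg _) hχ1
  refine (pow_le_pow_left₀ (norm_nonneg _) htri 2).trans ?_
  rw [← sq_abs (u x), ← mul_pow]
  generalize ‖fderiv ℝ u x‖ = a
  generalize |u x| * ‖fderiv ℝ χ x‖ = b
  have hsq : 0 ≤ (δ * a - b) ^ 2 / δ := by positivity
  have hexpand : (δ * a - b) ^ 2 / δ = δ * a ^ 2 - 2 * a * b + 1 / δ * b ^ 2 := by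
    field_simp
    ring
  linarith

variable {E : Type*} [NormedAddCommGroup E] [InnerProductSpace ℝ E]

/-- The bump function `f` stretched by the factor `R`, used as a cutoff as `R → ∞`. -/
def dilatedBump (f : ContDiffBump (0 : E)) (R : ℝ) (x : E) : ℝ := f (R⁻¹ • x)

variable (f : ContDiffBump (0 : E)) {R : ℝ} {x : E}

lemma dilatedBump_nonneg : 0 ≤ dilatedBump f R x := f.nonneg

lemma dilatedBump_le_one : dilatedBump f R x ≤ 1 := f.le_one

lemma contDiff_dilatedBump : ContDiff ℝ 1 (dilatedBump f R) :=
  f.contDiff.comp (contDiff_const_smul _)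

lemma hasCompactSupport_dilatedBump [FiniteDimensional ℝ E] (hR : R ≠ 0) :
    HasCompactSupport (dilatedBump f R) :=
  f.hasCompactSupport.comp_smul (inv_ne_zero hR)

lemma dilatedBump_eq_one (hR : 0 < R) (hx : ‖x‖ ≤ R * f.rIn) : dilatedBump f R x = 1 := by
  refine f.one_of_mem_closedBall ?_
  rwa [mem_closedBall_zero_iff, norm_smul, norm_inv, norm_of_nonneg hR.le, inv_mul_le_iff₀ hR]

lemma fderiv_dilatedBump_eq_zero (hR : 0 < R) (hx : ‖x‖ < R * f.rIn) :
    fderiv ℝ (dilatedBump f R) x = 0 := by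
  have h : dilatedBump f R =ᶠ[𝓝 x] fun _ => 1 := by
    filter_upwards [(isOpen_lt continuous_norm continuous_const).mem_nhds hx] with y hy
    exact dilatedBump_eq_one f hR (le_of_lt hy)
  rw [h.fderiv_eq, fderiv_const_apply]

variable [MeasurableSpace E] [BorelSpace E] {u : E → ℝ}

lemma tendsto_integral_dilatedBump_mul_rpow {μ : Measure E} (hu : Continuous u)
    (hu0 : ∀ x, 0 ≤ u x) {p : ℝ} (hp : 0 ≤ p) (hup : Integrable (fun x => u x ^ p) μ) :
    Tendsto (fun R => ∫ x, (dilatedBump f R x * u x) ^ p ∂μ) atTop (𝓝 (∫ x, u x ^ p ∂μ)) := by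
  refine tendsto_integral_filter_of_dominated_convergence (fun x => u x ^ p) ?_ ?_ hup ?_
  · exact .of_forall fun R => (((contDiff_dilatedBump f).continuous.fun_mul hu).rpow_const
      fun _ => .inr hp).aestronglyMeasurable
  · refine .of_forall fun R => .of_forall fun x => ?_
    have hnonneg := mul_nonneg (dilatedBump_nonneg f (R := R) (x := x)) (hu0 x)
    rw [norm_of_nonneg (rpow_nonneg hnonneg _)]
    exact rpow_le_rpow hnonneg (mul_le_of_le_one_left (hu0 x) (dilatedBump_le_one f)) hp
  · refine .of_forall fun x => tendsto_const_nhds.congr' ?_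
    filter_upwards [eventually_gt_atTop 0,
      (tendsto_id.atTop_mul_const f.rIn_pos).eventually_ge_atTop ‖x‖] with R hR hx
    rw [dilatedBump_eq_one f hR hx, one_mul]

variable [FiniteDimensional ℝ E]

/- The exponent `dim E` makes the gradient norm of the cutoff invariant under dilations. -/
lemma integral_norm_fderiv_dilatedBump_pow (μ : Measure E) [μ.IsAddHaarMeasure] (hR : 0 < R) :
    ∫ x, ‖fderiv ℝ (dilatedBump f R) x‖ ^ Module.finrank ℝ E ∂μ =
      ∫ x, ‖fderiv ℝ f x‖ ^ Module.finrank ℝ E ∂μ := by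
  have hchain (x : E) : ‖fderiv ℝ (dilatedBump f R) x‖ = R⁻¹ * ‖fderiv ℝ f (R⁻¹ • x)‖ := by
    rw [show dilatedBump f R = fun x => f (R⁻¹ • x) from rfl, fderiv_comp_smul, norm_smul,
      norm_inv, norm_of_nonneg hR.le]
  simp only [hchain, mul_pow]
  rw [integral_const_mul, Measure.integral_comp_inv_smul_of_nonneg μ
    (fun x => ‖fderiv ℝ f x‖ ^ Module.finrank ℝ E) hR.le, smul_eq_mul, ← mul_assoc, ← mul_pow,
    inv_mul_cancel₀ hR.ne', one_pow, one_mul]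

lemma integrable_sq_mul_norm_fderiv_dilatedBump_sq {μ : Measure E} [IsFiniteMeasureOnCompacts μ]
    (hu : Continuous u) (hR : R ≠ 0) :
    Integrable (fun x => u x ^ 2 * ‖fderiv ℝ (dilatedBump f R) x‖ ^ 2) μ := by
  have hc : Continuous fun x => u x ^ 2 * ‖fderiv ℝ (dilatedBump f R) x‖ ^ 2 :=
    (hu.pow 2).mul (((contDiff_dilatedBump f).continuous_fderiv one_ne_zero).norm.pow 2)
  refine hc.integrable_of_hasCompactSupport (HasCompactSupport.mul_left ?_)
  exact HasCompactSupport.comp_left (g := (· ^ 2))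
    ((hasCompactSupport_dilatedBump f hR).fderiv ℝ).norm (zero_pow two_ne_zero)

lemma integral_norm_fderiv_dilatedBump_mul_sq_le {μ : Measure E} [IsFiniteMeasureOnCompacts μ]
    (hu : ContDiff ℝ 1 u) (hu' : Integrable (fun x => ‖fderiv ℝ u x‖ ^ 2) μ) (hR : R ≠ 0) {δ : ℝ}
    (hδ : 0 < δ) :
    ∫ x, ‖fderiv ℝ (fun x => dilatedBump f R x * u x) x‖ ^ 2 ∂μ ≤
      (1 + δ) * ∫ x, ‖fderiv ℝ u x‖ ^ 2 ∂μ +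
        (1 + 1 / δ) * ∫ x, u x ^ 2 * ‖fderiv ℝ (dilatedBump f R) x‖ ^ 2 ∂μ := by
  have herr := integrable_sq_mul_norm_fderiv_dilatedBump_sq f (μ := μ) hu.continuous hR
  rw [← integral_const_mul, ← integral_const_mul,
    ← integral_add (hu'.const_mul _) (herr.const_mul _)]
  refine integral_mono_of_nonneg (.of_forall fun x => sq_nonneg _)
    ((hu'.const_mul _).add (herr.const_mul _)) (.of_forall fun x => ?_)
  exact norm_fderiv_mul_sq_le ((contDiff_dilatedBump f).differentiable one_ne_zero x)
    (hu.differentiable one_ne_zero x) (dilatedBump_nonneg f) (dilatedBump_le_one f) hδ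

end Cutoff

section Sobolev

open Set Filter Topology

variable {n : ℕ} {u : EuclideanSpace ℝ (Fin n) → ℝ}

lemma holderConjugate_div_sub_two_div_two (hn : 2 < n) :
    (n / (n - 2) : ℝ).HolderConjugate (n / 2) := by
  have hn' : (2 : ℝ) < n := mod_cast hn
  have hn2 : 0 < (n : ℝ) - 2 := sub_pos.2 hn'
  refine Real.holderConjugate_iff.2 ⟨(one_lt_div hn2).2 (by linarith), ?_⟩
  field_simp
  ring

lemma memLp_sq_ofReal_div_two {α : Type*} [MeasurableSpace α] {μ : Measure α} {g : α → ℝ}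
    (hg : AEStronglyMeasurable g μ) (hg0 : ∀ x, 0 ≤ g x) {p : ℝ} (hp : 0 < p)
    (hgp : Integrable (fun x => g x ^ p) μ) :
    MemLp (fun x => g x ^ 2) (ENNReal.ofReal (p / 2)) μ := by
  have hsq : AEStronglyMeasurable (fun x => g x ^ 2) μ := hg.pow 2
  rw [← integrable_norm_rpow_iff hsq (by simpa using hp) ENNReal.ofReal_ne_top,
    ENNReal.toReal_ofReal (by positivity)]
  refine hgp.congr (.of_forall fun x => ?_)
  dsimp only
  rw [norm_of_nonneg (sq_nonneg _), ← rpow_natCast_mul (hg0 x), Nat.cast_two,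
    mul_div_cancel₀ p two_ne_zero]

lemma integral_sq_mul_norm_fderiv_dilatedBump_sq_le (hn : 2 < n)
    (f : ContDiffBump (0 : EuclideanSpace ℝ (Fin n))) (hu : Continuous u) (hu0 : ∀ x, 0 ≤ u x)
    (huQ : Integrable fun x => u x ^ critExp n) {R : ℝ} (hR : 0 < R) :
    ∫ x, u x ^ 2 * ‖fderiv ℝ (dilatedBump f R) x‖ ^ 2 ≤
      (∫ x in {x | R * f.rIn ≤ ‖x‖}, u x ^ critExp n) ^ (1 / (n / (n - 2)) : ℝ) *
        (∫ x, ‖fderiv ℝ f x‖ ^ n) ^ (1 / (n / 2) : ℝ) := by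
  have hn0 : (0 : ℝ) < n := mod_cast (by omega : 0 < n)
  have hcrit : critExp n / 2 = n / (n - 2) := by
    rw [critExp]
    ring
  have hχ : Continuous fun x => ‖fderiv ℝ (dilatedBump f R) x‖ :=
    ((contDiff_dilatedBump f).continuous_fderiv one_ne_zero).norm
  have hχint : Integrable fun x => ‖fderiv ℝ (dilatedBump f R) x‖ ^ (n : ℝ) :=
    integrable_rpow_const_of_hasCompactSupport
      ((hasCompactSupport_dilatedBump f hR.ne').fderiv ℝ).norm hχ hn0
  have huLp := memLp_sq_ofReal_div_two hu.aestronglyMeasurable hu0 (critExp_pos hn) huQ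
  have hχLp := memLp_sq_ofReal_div_two hχ.aestronglyMeasurable (fun x => norm_nonneg _) hn0 hχint
  rw [hcrit] at huLp
  have hholder := integral_mul_le_setIntegral_rpow_mul_integral_rpow
    (holderConjugate_div_sub_two_div_two hn) (fun x => sq_nonneg (u x))
    (fun x => sq_nonneg ‖fderiv ℝ (dilatedBump f R) x‖) huLp hχLp
    (s := {x | R * f.rIn ≤ ‖x‖}) fun x hx => by
      rw [fderiv_dilatedBump_eq_zero f hR (not_le.1 hx), norm_zero, zero_pow two_ne_zero]
  have hscale := integral_norm_fderiv_dilatedBump_pow f volume hR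
  rw [finrank_euclideanSpace_fin] at hscale
  simp only [← rpow_natCast_mul (hu0 _), ← rpow_natCast_mul (norm_nonneg _), Nat.cast_two,
    mul_div_cancel₀ (n : ℝ) two_ne_zero, rpow_natCast, hscale, ← hcrit,
    mul_div_cancel₀ (critExp n) two_ne_zero] at hholder ⊢
  exact hholder

lemma tendsto_integral_sq_mul_norm_fderiv_dilatedBump_sq (hn : 2 < n)
    (f : ContDiffBump (0 : EuclideanSpace ℝ (Fin n))) (hu : Continuous u) (hu0 : ∀ x, 0 ≤ u x)
    (huQ : Integrable fun x => u x ^ critExp n) :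
    Tendsto (fun R => ∫ x, u x ^ 2 * ‖fderiv ℝ (dilatedBump f R) x‖ ^ 2) atTop (𝓝 0) := by
  have hp : 0 < (1 / (n / (n - 2)) : ℝ) :=
    one_div_pos.2 (holderConjugate_div_sub_two_div_two hn).pos
  have htail := (tendsto_setIntegral_le_norm_atTop huQ).comp
    (tendsto_id.atTop_mul_const f.rIn_pos)
  have hbound := (htail.rpow_const (.inr hp.le)).mul_const
    ((∫ x, ‖fderiv ℝ f x‖ ^ n) ^ (1 / (n / 2) : ℝ))
  rw [zero_rpow hp.ne', zero_mul] at hbound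
  refine squeeze_zero' (.of_forall fun R => integral_nonneg fun x => by positivity) ?_ hbound
  filter_upwards [eventually_gt_atTop 0] with R hR
  exact integral_sq_mul_norm_fderiv_dilatedBump_sq_le hn f hu hu0 huQ hR

theorem sobolev_inequality (hn : 2 < n) (hu : ContDiff ℝ 1 u) (hu0 : ∀ x, 0 ≤ u x)
    (huQ : Integrable fun x => u x ^ critExp n) (hu' : Integrable fun x => ‖fderiv ℝ u x‖ ^ 2) :
    (∫ x, u x ^ critExp n) ^ (1 - 2 / n : ℝ) ≤ sobolevConst n * ∫ x, ‖fderiv ℝ u x‖ ^ 2 := by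
  let f : ContDiffBump (0 : EuclideanSpace ℝ (Fin n)) := default
  have hn' : (2 : ℝ) < n := mod_cast hn
  have hexp : 0 ≤ (1 - 2 / n : ℝ) := sub_nonneg.2 ((div_le_one (by linarith)).2 hn'.le)
  have hmass := (tendsto_integral_dilatedBump_mul_rpow f hu.continuous hu0 (critExp_pos hn).le
    huQ).rpow_const (.inr hexp)
  have herr := tendsto_integral_sq_mul_norm_fderiv_dilatedBump_sq hn f hu.continuous hu0 huQ
  have hδ : ∀ δ > 0, (∫ x, u x ^ critExp n) ^ (1 - 2 / n : ℝ) ≤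
      sobolevConst n * ((1 + δ) * ∫ x, ‖fderiv ℝ u x‖ ^ 2) := fun δ hδ => by
    have hbound := ((herr.const_mul (1 + 1 / δ)).const_add
      ((1 + δ) * ∫ x, ‖fderiv ℝ u x‖ ^ 2)).const_mul (sobolevConst n)
    rw [mul_zero, add_zero] at hbound
    refine le_of_tendsto_of_tendsto hmass hbound ?_
    filter_upwards [eventually_gt_atTop 0] with R hR
    refine (sobolev_inequality_of_hasCompactSupport hn ((contDiff_dilatedBump f).mul hu)
      (fun x => mul_nonneg (dilatedBump_nonneg f) (hu0 x))
      (hasCompactSupport_dilatedBump f hR.ne').mul_right).trans ?_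
    exact mul_le_mul_of_nonneg_left
      (integral_norm_fderiv_dilatedBump_mul_sq_le f hu hu' hR.ne' hδ) (sobolevConst_pos hn).le
  have hcont : Continuous fun δ : ℝ => sobolevConst n * ((1 + δ) * ∫ x, ‖fderiv ℝ u x‖ ^ 2) := by
    fun_prop
  simpa only [add_zero, one_mul] using
    ge_of_tendsto (hcont.continuousWithinAt (s := Ioi 0) (x := 0))
      (eventually_mem_nhdsWithin.mono hδ)

end Sobolev

section ExtinctionODE

open Set

variable {J J' : ℝ → ℝ} {T α c : ℝ}

lemma rpow_le_sub_of_hasDerivAt_le (hα : 0 ≤ α) (hJpos : ∀ t ∈ Ico 0 T, 0 < J t)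
    (hJ : ∀ t ∈ Ico 0 T, HasDerivAt J (J' t) t)
    (hJ' : ∀ t ∈ Ico 0 T, J' t ≤ -c * J t ^ (1 - α)) {t : ℝ} (ht : t ∈ Ico 0 T) :
    J t ^ α ≤ J 0 ^ α - α * c * t := by
  have hsub : Icc 0 t ⊆ Ico 0 T := Icc_subset_Ico_right ht.2
  have hderiv (s) (hs : s ∈ Icc 0 t) : HasDerivAt (fun s => J s ^ α + α * c * s)
      (J' s * α * J s ^ (α - 1) + α * c * 1) s :=
    ((hJ s (hsub hs)).rpow_const (.inl (hJpos s (hsub hs)).ne')).add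
      ((hasDerivAt_id s).const_mul _)
  have hanti : AntitoneOn (fun s => J s ^ α + α * c * s) (Icc 0 t) := by
    refine antitoneOn_of_hasDerivWithinAt_nonpos (convex_Icc 0 t)
      (fun s hs => (hderiv s hs).continuousAt.continuousWithinAt)
      (fun s hs => (hderiv s (interior_subset hs)).hasDerivWithinAt) fun s hs => ?_
    have hs' := hsub (interior_subset hs)
    have hcancel : J s ^ (1 - α) * J s ^ (α - 1) = 1 := by
      rw [← rpow_add (hJpos s hs'), sub_add_sub_cancel', sub_self, rpow_zero]
    have hnonneg : 0 ≤ α * J s ^ (α - 1) := mul_nonneg hα (rpow_nonneg (hJpos s hs').le _)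
    linear_combination mul_le_mul_of_nonneg_right (hJ' s hs') hnonneg - α * c * hcancel
  have h := hanti (left_mem_Icc.2 ht.1) (right_mem_Icc.2 ht.1) ht.1
  dsimp only at h
  linarith

lemma le_rpow_div_of_hasDerivAt_le (hT : 0 < T) (hα : 0 < α) (hc : 0 < c)
    (hJpos : ∀ t ∈ Ico 0 T, 0 < J t) (hJ : ∀ t ∈ Ico 0 T, HasDerivAt J (J' t) t)
    (hJ' : ∀ t ∈ Ico 0 T, J' t ≤ -c * J t ^ (1 - α)) : T ≤ J 0 ^ α / (α * c) := by
  by_contra! hlt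
  have hmem : J 0 ^ α / (α * c) ∈ Ico 0 T :=
    ⟨div_nonneg (rpow_nonneg (hJpos 0 ⟨le_rfl, hT⟩).le _) (mul_pos hα hc).le, hlt⟩
  have h := rpow_le_sub_of_hasDerivAt_le hα.le hJpos hJ hJ' hmem
  rw [mul_div_cancel₀ _ (mul_pos hα hc).ne', sub_self] at h
  exact h.not_gt (rpow_pos_of_pos (hJpos _ hmem) _)

end ExtinctionODE

lemma contDiff_of_contDiffOn_prod_univ {E F G : Type*} [NormedAddCommGroup E] [NormedSpace ℝ E]
    [NormedAddCommGroup F] [NormedSpace ℝ F] [NormedAddCommGroup G] [NormedSpace ℝ G]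
    {k : WithTop ℕ∞} {f : E → F → G} {s : Set E}
    (hf : ContDiffOn ℝ k (fun p : E × F => f p.1 p.2) (s ×ˢ Set.univ)) {a : E} (ha : a ∈ s) :
    ContDiff ℝ k (f a) :=
  contDiffOn_univ.1 (hf.comp (contDiff_prodMk_right a).contDiffOn fun x _ => ⟨ha, Set.mem_univ x⟩)

lemma sobolev_inequality_rpow {d : ℕ} (hd : 2 < d) {v : EuclideanSpace ℝ (Fin d) → ℝ}
    (hv : ContDiff ℝ 1 v) (hpos : ∀ x, 0 < v x)
    (hint : Integrable fun x => v x ^ (2 * (d : ℝ) / (d + 2)))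
    (hgrad : Integrable fun x => ‖gradient (fun y => v y ^ (((d : ℝ) - 2) / (d + 2))) x‖ ^ 2) :
    (∫ x, v x ^ (2 * (d : ℝ) / (d + 2))) ^ (1 - 2 / (d : ℝ)) ≤
      sobolevConst d * ∫ x, ‖gradient (fun y => v y ^ (((d : ℝ) - 2) / (d + 2))) x‖ ^ 2 := by
  have hd2 : (d : ℝ) - 2 ≠ 0 := sub_ne_zero.2 (mod_cast hd.ne')
  have hexp : ((d : ℝ) - 2) / (d + 2) * critExp d = 2 * d / (d + 2) := by
    rw [critExp]
    field_simp
  have hpow (x) : v x ^ (2 * (d : ℝ) / (d + 2)) =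
      (v x ^ (((d : ℝ) - 2) / (d + 2))) ^ critExp d := by
    rw [← rpow_mul (hpos x).le, hexp]
  have hnorm (w : EuclideanSpace ℝ (Fin d) → ℝ) (x) : ‖gradient w x‖ = ‖fderiv ℝ w x‖ :=
    LinearIsometryEquiv.norm_map _ _
  simp only [hpow, hnorm] at hint hgrad ⊢
  exact sobolev_inequality hd (hv.rpow_const_of_ne fun x => (hpos x).ne')
    (fun x => rpow_nonneg (hpos x).le _) hint hgrad

lemma deriv_le_of_dissipation_le {d : ℕ} (hd : 2 < d) {v : EuclideanSpace ℝ (Fin d) → ℝ}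
    (hv : ContDiff ℝ 1 v) (hpos : ∀ x, 0 < v x)
    (hint : Integrable fun x => v x ^ (2 * (d : ℝ) / (d + 2)))
    (hgrad : Integrable fun x => ‖gradient (fun y => v y ^ (((d : ℝ) - 2) / (d + 2))) x‖ ^ 2)
    {j' : ℝ} (hj' : j' ≤ -((((d : ℝ) - 2) / (d + 2)) + 1) *
      ∫ x, ‖gradient (fun y => v y ^ (((d : ℝ) - 2) / (d + 2))) x‖ ^ 2) :
    j' ≤ -(2 * (d : ℝ) / (d + 2)) * (sobolevConst d)⁻¹ *
      (∫ x, v x ^ (2 * (d : ℝ) / (d + 2))) ^ (1 - 2 / (d : ℝ)) := by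
  have hsob := (inv_mul_le_iff₀ (sobolevConst_pos hd)).2
    (sobolev_inequality_rpow hd hv hpos hint hgrad)
  have hcoeff : ((d : ℝ) - 2) / (d + 2) + 1 = 2 * d / (d + 2) := by
    field_simp
    ring
  rw [hcoeff] at hj'
  have hnonneg : (0 : ℝ) ≤ 2 * d / (d + 2) := by positivity
  linear_combination hj' + mul_le_mul_of_nonneg_left hsob hnonneg

theorem flow_extinction_general (d : ℕ) (hd : 3 ≤ d) (T : ℝ) (hT : 0 < T)
    (v : ℝ → EuclideanSpace ℝ (Fin d) → ℝ)
    (hpos : ∀ t ∈ Set.Ico (0 : ℝ) T, ∀ x, 0 < v t x)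
    (hsmooth : ∀ t ∈ Set.Ico (0 : ℝ) T, ContDiff ℝ 1 (v t))
    (hgrad : ∀ t ∈ Set.Ico (0 : ℝ) T,
      Integrable fun x => ‖gradient (fun y => v t y ^ (((d : ℝ) - 2) / ((d : ℝ) + 2))) x‖ ^ 2)
    (J J' : ℝ → ℝ)
    (hint : ∀ t ∈ Set.Ico (0 : ℝ) T,
      Integrable (fun x => v t x ^ (2 * (d : ℝ) / ((d : ℝ) + 2))))
    (hJdef : ∀ t ∈ Set.Ico (0 : ℝ) T,
      J t = ∫ x, v t x ^ (2 * (d : ℝ) / ((d : ℝ) + 2)))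
    (hJ' : ∀ t ∈ Set.Ico (0 : ℝ) T, HasDerivAt J (J' t) t)
    (hJ'le : ∀ t ∈ Set.Ico (0 : ℝ) T,
      J' t ≤ -((((d : ℝ) - 2) / ((d : ℝ) + 2)) + 1) *
        ∫ x, ‖gradient (fun y => v t y ^ (((d : ℝ) - 2) / ((d : ℝ) + 2))) x‖ ^ 2) :
    (∀ t ∈ Set.Ico (0 : ℝ) T,
      J' t ≤ -(2 * (d : ℝ) / ((d : ℝ) + 2)) * (sobolevConst d)⁻¹ *
        J t ^ (1 - 2 / (d : ℝ))) ∧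
    (∀ t ∈ Set.Ico (0 : ℝ) T,
      J t ^ ((2 : ℝ) / (d : ℝ)) ≤
        J 0 ^ ((2 : ℝ) / (d : ℝ)) - 4 / (((d : ℝ) + 2) * sobolevConst d) * t) ∧
    T ≤ ((d : ℝ) + 2) / 4 * sobolevConst d * J 0 ^ ((2 : ℝ) / (d : ℝ)) := by
  have hd0 : (d : ℝ) ≠ 0 := mod_cast (by omega : d ≠ 0)
  have hS := sobolevConst_pos hd
  have hJpos : ∀ t ∈ Set.Ico 0 T, 0 < J t := fun t ht => by
    rw [hJdef t ht]
    exact integral_pos_of_forall_pos (fun x => rpow_pos_of_pos (hpos t ht x) _) (hint t ht)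
  have hdecay : ∀ t ∈ Set.Ico 0 T,
      J' t ≤ -(2 * (d : ℝ) / (d + 2)) * (sobolevConst d)⁻¹ * J t ^ (1 - 2 / (d : ℝ)) :=
    fun t ht => by
      rw [hJdef t ht]
      exact deriv_le_of_dissipation_le hd (hsmooth t ht) (hpos t ht) (hint t ht) (hgrad t ht)
        (hJ'le t ht)
  have hrate : 2 / (d : ℝ) * (2 * d / (d + 2) * (sobolevConst d)⁻¹) =
      4 / ((d + 2) * sobolevConst d) := by
    field_simp
    ring
  have hα : 0 < 2 / (d : ℝ) := by positivity
  have hc : 0 < 2 * (d : ℝ) / (d + 2) * (sobolevConst d)⁻¹ := by positivity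
  have hode : ∀ t ∈ Set.Ico 0 T,
      J' t ≤ -(2 * (d : ℝ) / (d + 2) * (sobolevConst d)⁻¹) * J t ^ (1 - 2 / (d : ℝ)) := by
    simpa only [neg_mul] using hdecay
  refine ⟨hdecay, fun t ht => ?_, ?_⟩
  · rw [← hrate]
    exact rpow_le_sub_of_hasDerivAt_le hα.le hJpos hJ' hode ht
  · refine (le_rpow_div_of_hasDerivAt_le hT hα hc hJpos hJ' hode).trans_eq ?_
    rw [hrate]
    field_simp

/-- finite-time extinction of the fast diffusion flow via the Sobolev
inequality: differential inequality for `J`, its integrated form, and the resulting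
bound on the extinction time. -/
theorem flow_extinction (d : ℕ) (hd : 3 ≤ d) (T : ℝ) (hT : 0 < T)
    (v : ℝ → EuclideanSpace ℝ (Fin d) → ℝ)
    (hpos : ∀ t ∈ Set.Ico (0 : ℝ) T, ∀ x, 0 < v t x)
    (hsmooth : ContDiffOn ℝ (⊤ : ℕ∞) (fun p : ℝ × EuclideanSpace ℝ (Fin d) => v p.1 p.2)
      (Set.Ico (0 : ℝ) T ×ˢ (Set.univ : Set (EuclideanSpace ℝ (Fin d)))))
    (hpde : ∀ t ∈ Set.Ico (0 : ℝ) T, ∀ x,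
      HasDerivAt (fun s => v s x)
        (lap d (fun y => v t y ^ (((d : ℝ) - 2) / ((d : ℝ) + 2))) x) t)
    (hmem : ∀ t ∈ Set.Ico (0 : ℝ) T,
      MemD12 d (fun x => v t x ^ (((d : ℝ) - 2) / ((d : ℝ) + 2))))
    (J J' : ℝ → ℝ)
    (hint : ∀ t ∈ Set.Ico (0 : ℝ) T,
      Integrable (fun x => v t x ^ (2 * (d : ℝ) / ((d : ℝ) + 2))))
    (hJdef : ∀ t ∈ Set.Ico (0 : ℝ) T,
      J t = ∫ x, v t x ^ (2 * (d : ℝ) / ((d : ℝ) + 2)))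
    (hJ' : ∀ t ∈ Set.Ico (0 : ℝ) T, HasDerivAt J (J' t) t)
    (hJ'eq : ∀ t ∈ Set.Ico (0 : ℝ) T,
      J' t = -((((d : ℝ) - 2) / ((d : ℝ) + 2)) + 1) *
        ∫ x, ‖gradient (fun y => v t y ^ (((d : ℝ) - 2) / ((d : ℝ) + 2))) x‖ ^ 2) :
    (∀ t ∈ Set.Ico (0 : ℝ) T,
      J' t ≤ -(2 * (d : ℝ) / ((d : ℝ) + 2)) * (sobolevConst d)⁻¹ *
        J t ^ (1 - 2 / (d : ℝ))) ∧
    (∀ t ∈ Set.Ico (0 : ℝ) T,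
      J t ^ ((2 : ℝ) / (d : ℝ)) ≤
        J 0 ^ ((2 : ℝ) / (d : ℝ)) - 4 / (((d : ℝ) + 2) * sobolevConst d) * t) ∧
    T ≤ ((d : ℝ) + 2) / 4 * sobolevConst d * J 0 ^ ((2 : ℝ) / (d : ℝ)) :=
  flow_extinction_general d hd T hT v hpos
    (fun _ ht => (contDiff_of_contDiffOn_prod_univ hsmooth ht).of_le (mod_cast le_top))
    (fun t ht => (hmem t ht).2.1) J J' hint hJdef hJ' fun t ht => (hJ'eq t ht).le
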